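/- arXiv:1411.1660 — 2 statements merged into one kernel-verified Lean document; each statement's English description precedes it below -/
import Mathlib

section
/- Let M ≥ 0 be an integer and let f be a probability density on ℝ with ∫ θ^{2M+2} f(θ) dθ < ∞, so that its Fourier transform f*(ω) = ∫ e^{iωθ} f(θ) dθ is (2M+2) times continuously differentiable. Then ∫_ℝ |θ|^{2M+1} f(θ) dθ = (−1)^{M+1} (2/π) · lim_{T→∞} ∫_0^T ω^{−1} · (d^{2M+1}/dω^{2M+1}) Re f*(ω) dω, where the integrand extends continuously to ω = 0 (since the (2M+1)-st derivative of Re f* is an odd function vanishing at 0). -/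
open MeasureTheory Filter

/-- Fourier transform `t*(ω) = ∫ e^{iωx} t(x) dx` of a real-valued function. -/
noncomputable def ft (t : ℝ → ℝ) (ω : ℝ) : ℂ :=
  ∫ x : ℝ, Complex.exp (Complex.I * (ω : ℂ) * (x : ℂ)) * (t x : ℂ)

/-!
Differentiating under the integral, the odd derivative of `Re f*` is, up to sign, the sine transform
of `g θ = θ ^ (2M+1) f θ`. Dividing by `ω`, integrating over `(0, T]` and exchanging the integrals
turns the kernel into the sine integral `Si (T θ)`, which is bounded and tends to `(π / 2) sign θ`.
By dominated convergence the limit is `π / 2` times the integral of `sign θ * g θ = |θ|^(2M+1) f θ`.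
-/

open scoped FourierTransform Real Topology

section SineIntegral

/-- The sine integral `Si T = ∫₀ᵀ sin x / x dx`, extended to negative `T` as an odd function; it
carries the Dirichlet integral as its limit at infinity. The integrand is `Real.sinc`, so that it is
continuous at `0`. -/
noncomputable def sinIntegral (T : ℝ) : ℝ := ∫ x in (0 : ℝ)..T, Real.sinc x

lemma sinIntegral_zero : sinIntegral 0 = 0 := intervalIntegral.integral_same

lemma sinIntegral_neg (T : ℝ) : sinIntegral (-T) = -sinIntegral T := by
  have h := intervalIntegral.integral_comp_neg (a := 0) (b := T) Real.sinc
  simp only [Real.sinc_neg, neg_zero] at h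
  rw [sinIntegral, sinIntegral, h, intervalIntegral.integral_symm]

lemma continuous_sinIntegral : Continuous sinIntegral :=
  intervalIntegral.continuous_primitive (fun a b ↦ Real.continuous_sinc.intervalIntegrable a b) 0

lemma integral_sinc_mul_mul_eq_sinIntegral (T θ : ℝ) :
    ∫ ω in (0 : ℝ)..T, Real.sinc (ω * θ) * θ = sinIntegral (T * θ) := by
  rw [intervalIntegral.integral_mul_const, mul_comm, intervalIntegral.mul_integral_comp_mul_right,
    zero_mul, sinIntegral]

lemma integral_exp_neg_mul_Ioi_zero {x : ℝ} (hx : 0 < x) :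
    ∫ y in Set.Ioi (0 : ℝ), Real.exp (-x * y) = x⁻¹ := by
  rw [integral_exp_mul_Ioi (neg_neg_of_pos hx), mul_zero, Real.exp_zero, neg_div_neg_eq, one_div]

lemma hasDerivAt_exp_neg_mul_mul_sin_add_cos (x y : ℝ) :
    HasDerivAt (fun t ↦ -(Real.exp (-t * y) * (y * Real.sin t + Real.cos t) / (1 + y ^ 2)))
      (Real.sin x * Real.exp (-x * y)) x := by
  have hexp : HasDerivAt (fun t : ℝ ↦ Real.exp (-t * y)) (Real.exp (-x * y) * (-1 * y)) x :=
    ((hasDerivAt_id x).neg.mul_const y).exp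
  have htrig : HasDerivAt (fun t ↦ y * Real.sin t + Real.cos t)
      (y * Real.cos x + -Real.sin x) x :=
    ((Real.hasDerivAt_sin x).const_mul y).add (Real.hasDerivAt_cos x)
  convert! ((hexp.mul htrig).div_const (1 + y ^ 2)).neg using 1
  field_simp
  ring

lemma integral_sin_mul_exp_neg_mul (T y : ℝ) :
    ∫ x in (0 : ℝ)..T, Real.sin x * Real.exp (-x * y) =
      (1 + y ^ 2)⁻¹ - Real.exp (-T * y) * (y * Real.sin T + Real.cos T) / (1 + y ^ 2) := by
  rw [intervalIntegral.integral_eq_sub_of_hasDerivAt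
    (fun x _ ↦ hasDerivAt_exp_neg_mul_mul_sin_add_cos x y)
    (Continuous.intervalIntegrable (by fun_prop) _ _)]
  simp only [neg_zero, zero_mul, Real.exp_zero, Real.sin_zero, Real.cos_zero, mul_zero, zero_add,
    one_mul]
  ring

lemma integrable_sin_mul_exp_neg_mul_prod (T : ℝ) :
    Integrable (Function.uncurry fun x y : ℝ ↦ Real.sin x * Real.exp (-x * y))
      ((volume.restrict (Set.Ioc 0 T)).prod (volume.restrict (Set.Ioi 0))) := by
  rw [integrable_prod_iff (Continuous.aestronglyMeasurable (by fun_prop))]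
  constructor
  · filter_upwards [ae_restrict_mem measurableSet_Ioc] with x hx
    exact (integrableOn_exp_mul_Ioi (neg_neg_of_pos hx.1) 0).const_mul (Real.sin x)
  · have hsinc : IntegrableOn (fun x ↦ |Real.sinc x|) (Set.Ioc 0 T) :=
      Real.continuous_sinc.abs.integrableOn_Icc.mono_set Set.Ioc_subset_Icc_self
    refine hsinc.congr ?_
    filter_upwards [ae_restrict_mem measurableSet_Ioc] with x hx
    simp only [Function.uncurry, norm_mul, Real.norm_eq_abs, Real.abs_exp]
    rw [integral_const_mul, integral_exp_neg_mul_Ioi_zero hx.1, Real.sinc_of_ne_zero hx.1.ne',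
      abs_div, abs_of_pos hx.1, div_eq_mul_inv]

lemma sinIntegral_eq_integral_Ioi {T : ℝ} (hT : 0 ≤ T) :
    sinIntegral T = ∫ y in Set.Ioi (0 : ℝ), ((1 + y ^ 2)⁻¹ -
      Real.exp (-T * y) * (y * Real.sin T + Real.cos T) / (1 + y ^ 2)) := by
  -- Write `1 / x` as the Laplace integral `∫ y > 0, exp (-x y)` and exchange the integrals.
  calc sinIntegral T
      = ∫ x in Set.Ioc 0 T, ∫ y in Set.Ioi (0 : ℝ), Real.sin x * Real.exp (-x * y) := by
        rw [sinIntegral, intervalIntegral.integral_of_le hT]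
        refine setIntegral_congr_fun measurableSet_Ioc fun x hx ↦ ?_
        rw [integral_const_mul, integral_exp_neg_mul_Ioi_zero hx.1,
          Real.sinc_of_ne_zero hx.1.ne', div_eq_mul_inv]
    _ = ∫ y in Set.Ioi (0 : ℝ), ∫ x in (0 : ℝ)..T, Real.sin x * Real.exp (-x * y) := by
        rw [integral_integral_swap (integrable_sin_mul_exp_neg_mul_prod T)]
        simp_rw [intervalIntegral.integral_of_le hT]
    _ = _ := by simp_rw [integral_sin_mul_exp_neg_mul]

lemma abs_exp_mul_mul_sin_add_cos_div_le (T y : ℝ) :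
    |Real.exp (-T * y) * (y * Real.sin T + Real.cos T) / (1 + y ^ 2)| ≤ Real.exp (-T * y) := by
  have hy : 1 ≤ 1 + y ^ 2 := le_add_of_nonneg_right (sq_nonneg y)
  have hcs : |y * Real.sin T + Real.cos T| ≤ 1 + y ^ 2 := by
    refine abs_le_of_sq_le_sq ?_ (by positivity)
    nlinarith [sq_nonneg (y * Real.cos T - Real.sin T), Real.sin_sq_add_cos_sq T]
  rw [abs_div, abs_mul, Real.abs_exp, abs_of_pos (zero_lt_one.trans_le hy), mul_div_assoc]
  exact mul_le_of_le_one_right (Real.exp_pos _).le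
    (div_le_one_of_le₀ hcs (zero_le_one.trans hy))

lemma abs_sinIntegral_sub_pi_div_two_le {T : ℝ} (hT : 0 < T) :
    |sinIntegral T - π / 2| ≤ T⁻¹ := by
  set r : ℝ → ℝ := fun y ↦ Real.exp (-T * y) * (y * Real.sin T + Real.cos T) / (1 + y ^ 2)
  have hexp := integrableOn_exp_mul_Ioi (neg_neg_of_pos hT) 0
  have hr_le : ∀ y, ‖r y‖ ≤ Real.exp (-T * y) := abs_exp_mul_mul_sin_add_cos_div_le T
  have hr : IntegrableOn r (Set.Ioi 0) := by
    refine hexp.mono' (Continuous.aestronglyMeasurable ?_) (.of_forall hr_le)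
    exact Continuous.div (by fun_prop) (by fun_prop) fun y ↦ by positivity
  rw [sinIntegral_eq_integral_Ioi hT.le,
    integral_sub integrable_inv_one_add_sq.integrableOn hr, integral_Ioi_inv_one_add_sq,
    Real.arctan_zero, sub_zero, sub_sub_cancel_left, abs_neg,
    ← integral_exp_neg_mul_Ioi_zero hT, ← Real.norm_eq_abs]
  exact norm_integral_le_of_norm_le hexp (.of_forall hr_le)

lemma tendsto_sinIntegral_atTop : Tendsto sinIntegral atTop (𝓝 (π / 2)) := by
  rw [tendsto_iff_norm_sub_tendsto_zero]
  refine squeeze_zero' (.of_forall fun _ ↦ norm_nonneg _) ?_ tendsto_inv_atTop_zero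
  filter_upwards [eventually_gt_atTop 0] with T hT using abs_sinIntegral_sub_pi_div_two_le hT

lemma tendsto_sinIntegral_mul_atTop (θ : ℝ) :
    Tendsto (fun T ↦ sinIntegral (T * θ)) atTop (𝓝 (π / 2 * Real.sign θ)) := by
  rcases lt_trichotomy θ 0 with hθ | rfl | hθ
  · have h := (tendsto_sinIntegral_atTop.comp
      (tendsto_id.atTop_mul_const (neg_pos.mpr hθ))).neg
    simpa [Function.comp_def, sinIntegral_neg, Real.sign_of_neg hθ] using h
  · simp [sinIntegral_zero]
  · simpa [Function.comp_def, Real.sign_of_pos hθ] using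
      tendsto_sinIntegral_atTop.comp (tendsto_id.atTop_mul_const hθ)

lemma abs_sinIntegral_le (T : ℝ) : |sinIntegral T| ≤ 3 := by
  wlog hT : 0 ≤ T generalizing T
  · simpa [sinIntegral_neg] using this (-T) (by linarith)
  rcases le_total T 1 with hT1 | hT1
  · have h := intervalIntegral.norm_integral_le_of_norm_le_const (a := 0) (b := T)
      (f := Real.sinc) fun x _ ↦ Real.abs_sinc_le_one x
    rw [Real.norm_eq_abs, sub_zero, abs_of_nonneg hT, one_mul] at h
    exact h.trans (by linarith)
  · have hsub := abs_le.mp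
      ((abs_sinIntegral_sub_pi_div_two_le (by linarith)).trans (inv_le_one_of_one_le₀ hT1))
    rw [abs_le]
    constructor <;> linarith [Real.pi_pos, Real.pi_lt_four]

end SineIntegral

section SineTransform

variable {μ : Measure ℝ} {g : ℝ → ℝ}

lemma integral_integral_sin_mul_div [SFinite μ] (hg : Integrable (fun θ ↦ θ * g θ) μ) (T : ℝ) :
    ∫ ω in (0 : ℝ)..T, (∫ θ, Real.sin (ω * θ) * g θ ∂μ) / ω =
      ∫ θ, sinIntegral (T * θ) * g θ ∂μ := by
  have : IsFiniteMeasure (volume.restrict (Set.uIoc 0 T)) :=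
    inferInstanceAs (IsFiniteMeasure (volume.restrict (Set.Ioc _ _)))
  have hprod : Integrable (Function.uncurry fun ω θ ↦ Real.sinc (ω * θ) * (θ * g θ))
      ((volume.restrict (Set.uIoc 0 T)).prod μ) :=
    (hg.comp_snd _).bdd_mul (c := 1)
      (Real.continuous_sinc.comp continuous_mul).aestronglyMeasurable
      (.of_forall fun p ↦ Real.abs_sinc_le_one (p.1 * p.2))
  calc ∫ ω in (0 : ℝ)..T, (∫ θ, Real.sin (ω * θ) * g θ ∂μ) / ω
      = ∫ ω in (0 : ℝ)..T, ∫ θ, Real.sinc (ω * θ) * (θ * g θ) ∂μ := by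
        refine intervalIntegral.integral_congr_ae ?_
        filter_upwards [Measure.ae_ne volume 0] with ω hω _
        rw [← integral_div]
        congr 1 with θ
        rcases eq_or_ne θ 0 with rfl | hθ
        · simp
        · rw [Real.sinc_of_ne_zero (mul_ne_zero hω hθ)]
          field_simp
    _ = ∫ θ, (∫ ω in (0 : ℝ)..T, Real.sinc (ω * θ) * (θ * g θ)) ∂μ :=
        intervalIntegral_integral_swap hprod
    _ = _ := by
        simp_rw [← mul_assoc, intervalIntegral.integral_mul_const,
          ← integral_sinc_mul_mul_eq_sinIntegral, intervalIntegral.integral_mul_const]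

lemma tendsto_integral_sinIntegral_mul (hg : Integrable g μ) :
    Tendsto (fun T ↦ ∫ θ, sinIntegral (T * θ) * g θ ∂μ) atTop
      (𝓝 (π / 2 * ∫ θ, Real.sign θ * g θ ∂μ)) := by
  rw [← integral_const_mul]
  refine tendsto_integral_filter_of_dominated_convergence (fun θ ↦ 3 * ‖g θ‖)
    (.of_forall fun T ↦ ?_) (.of_forall fun T ↦ .of_forall fun θ ↦ ?_) (hg.norm.const_mul 3)
    (.of_forall fun θ ↦ ?_)
  · exact (continuous_sinIntegral.comp (continuous_const_mul T)).aestronglyMeasurable.mul hg.1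
  · rw [norm_mul]
    exact mul_le_mul_of_nonneg_right (abs_sinIntegral_le _) (norm_nonneg _)
  · simpa only [mul_assoc] using (tendsto_sinIntegral_mul_atTop θ).mul_const (g θ)

lemma tendsto_setIntegral_integral_sin_mul_div [SFinite μ] (hg : Integrable g μ)
    (hg' : Integrable (fun θ ↦ θ * g θ) μ) :
    Tendsto (fun T ↦ ∫ ω in Set.Ioc (0 : ℝ) T, (∫ θ, Real.sin (ω * θ) * g θ ∂μ) / ω) atTop
      (𝓝 (π / 2 * ∫ θ, Real.sign θ * g θ ∂μ)) := by
  refine (tendsto_integral_sinIntegral_mul hg).congr' ?_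
  filter_upwards [eventually_ge_atTop 0] with T hT
  rw [← integral_integral_sin_mul_div hg', intervalIntegral.integral_of_le hT]

end SineTransform

lemma integrable_pow_smul_of_le {E : Type*} [NormedAddCommGroup E] [NormedSpace ℝ E]
    {μ : Measure ℝ} {f : ℝ → E} {n N : ℕ} (hf : Integrable f μ)
    (hN : Integrable (fun x ↦ x ^ N • f x) μ) (hn : n ≤ N) :
    Integrable (fun x ↦ x ^ n • f x) μ := by
  refine (hf.norm.add hN.norm).mono' ((continuous_pow n).aestronglyMeasurable.smul hf.1)
    (.of_forall fun x ↦ ?_)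
  have hpow : |x| ^ n ≤ 1 + |x| ^ N := by
    rcases le_total |x| 1 with hx | hx
    · exact (pow_le_one₀ (abs_nonneg x) hx).trans (le_add_of_nonneg_right (by positivity))
    · exact (pow_le_pow_right₀ hx hn).trans (le_add_of_nonneg_left zero_le_one)
  calc ‖x ^ n • f x‖ = |x| ^ n * ‖f x‖ := by rw [norm_smul, norm_pow, Real.norm_eq_abs]
    _ ≤ (1 + |x| ^ N) * ‖f x‖ := by gcongr
    _ = ‖f x‖ + ‖x ^ N • f x‖ := by rw [norm_smul, norm_pow, Real.norm_eq_abs, one_add_mul]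

lemma iteratedDeriv_clm_comp {𝕜 F G : Type*} [NontriviallyNormedField 𝕜] [NormedAddCommGroup F]
    [NormedSpace 𝕜 F] [NormedAddCommGroup G] [NormedSpace 𝕜 G] (L : F →L[𝕜] G) {n : ℕ}
    {f : 𝕜 → F} {x : 𝕜} (hf : ContDiffAt 𝕜 n f x) :
    iteratedDeriv n (fun y ↦ L (f y)) x = L (iteratedDeriv n f x) :=
  congrArg (fun A ↦ A fun _ ↦ 1) (L.iteratedFDeriv_comp_left hf le_rfl)

lemma sign_mul_pow_of_odd {n : ℕ} (hn : Odd n) (x : ℝ) : Real.sign x * x ^ n = |x| ^ n := by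
  rcases lt_trichotomy x 0 with hx | rfl | hx
  · rw [Real.sign_of_neg hx, abs_of_neg hx, hn.neg_pow, neg_one_mul]
  · rw [Real.sign_zero, abs_zero, zero_mul, zero_pow hn.pos.ne']
  · rw [Real.sign_of_pos hx, abs_of_pos hx, one_mul]

section FourierTransform

variable {f : ℝ → ℝ} {n : ℕ}

lemma ft_eq_fourier_comp_mul (f : ℝ → ℝ) :
    ft f = fun ω ↦ 𝓕 (fun x ↦ (f x : ℂ)) (-(2 * π)⁻¹ * ω) := by
  ext ω
  rw [Real.fourier_real_eq_integral_exp_smul, ft]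
  congr 1 with x
  rw [smul_eq_mul]
  congr 2
  push_cast
  field_simp

lemma integrable_pow_smul_ofReal (hf : Integrable f) (hn : Integrable fun x ↦ x ^ n * f x)
    (k : ℕ) (hk : (k : ℕ∞) ≤ n) : Integrable fun x ↦ x ^ k • (f x : ℂ) := by
  refine integrable_pow_smul_of_le hf.ofReal ?_ (Nat.cast_le.mp hk)
  simpa [Complex.real_smul] using hn.ofReal (𝕜 := ℂ)

lemma contDiff_fourier_ofReal (hf : Integrable f) (hn : Integrable fun x ↦ x ^ n * f x) :
    ContDiff ℝ n (𝓕 fun x ↦ (f x : ℂ)) :=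
  Real.contDiff_fourier (N := n) fun k hk ↦ by
    simpa [norm_smul] using (integrable_pow_smul_ofReal hf hn k hk).norm

lemma contDiff_ft (hf : Integrable f) (hn : Integrable fun x ↦ x ^ n * f x) :
    ContDiff ℝ n (ft f) := by
  rw [ft_eq_fourier_comp_mul]
  exact (contDiff_fourier_ofReal hf hn).comp (contDiff_const.mul contDiff_id)

lemma iteratedDeriv_ft (hf : Integrable f) (hn : Integrable fun x ↦ x ^ n * f x) (ω : ℝ) :
    iteratedDeriv n (ft f) ω = Complex.I ^ n * ft (fun x ↦ x ^ n * f x) ω := by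
  have hscale (x : ℝ) :
      ((-(2 * π)⁻¹ : ℝ) : ℂ) ^ n * (-2 * π * Complex.I * x) ^ n = Complex.I ^ n * x ^ n := by
    rw [← mul_pow, ← mul_pow]
    push_cast
    field_simp
  rw [ft_eq_fourier_comp_mul, ft_eq_fourier_comp_mul,
    iteratedDeriv_comp_const_smul (contDiff_fourier_ofReal hf hn),
    Real.iteratedDeriv_fourier (N := n) (integrable_pow_smul_ofReal hf hn) le_rfl]
  simp only [Real.fourier_real_eq_integral_exp_smul, ← integral_smul, ← integral_const_mul]
  congr 1 with x : 1
  generalize Complex.exp _ = e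
  simp only [Complex.real_smul, smul_eq_mul, Complex.ofReal_mul (x ^ n), Complex.ofReal_pow]
  linear_combination e * f x * hscale x

lemma im_ft (hf : Integrable f) (ω : ℝ) : (ft f ω).im = ∫ θ, Real.sin (ω * θ) * f θ := by
  have hint : Integrable fun θ : ℝ ↦ Complex.exp (Complex.I * ω * θ) * f θ := by
    refine (hf.ofReal (𝕜 := ℂ)).bdd_mul (c := 1)
      (Continuous.aestronglyMeasurable (by fun_prop)) (.of_forall fun θ ↦ le_of_eq ?_)
    rw [mul_assoc, ← Complex.ofReal_mul, Complex.norm_exp_I_mul_ofReal]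
  rw [ft, ← RCLike.im_eq_complex_im, ← integral_im hint]
  congr 1 with θ
  rw [RCLike.im_eq_complex_im, Complex.im_mul_ofReal, mul_assoc, mul_comm Complex.I,
    ← Complex.ofReal_mul, Complex.exp_ofReal_mul_I_im]

lemma iteratedDeriv_re_ft_odd (M : ℕ) (hf : Integrable f)
    (hM : Integrable fun θ ↦ θ ^ (2 * M + 1) * f θ) (ω : ℝ) :
    iteratedDeriv (2 * M + 1) (fun ω' ↦ (ft f ω').re) ω =
      (-1) ^ (M + 1) * ∫ θ, Real.sin (ω * θ) * (θ ^ (2 * M + 1) * f θ) := by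
  have hI : Complex.I ^ (2 * M + 1) = ((-1) ^ M : ℝ) * Complex.I := by
    rw [pow_succ, pow_mul, Complex.I_sq]
    push_cast
    rfl
  calc iteratedDeriv (2 * M + 1) (fun ω' ↦ (ft f ω').re) ω
      = (iteratedDeriv (2 * M + 1) (ft f) ω).re :=
        iteratedDeriv_clm_comp Complex.reCLM (contDiff_ft hf hM).contDiffAt
    _ = (-1) ^ (M + 1) * (ft (fun θ ↦ θ ^ (2 * M + 1) * f θ) ω).im := by
        rw [iteratedDeriv_ft hf hM, hI, mul_assoc, Complex.re_ofReal_mul, Complex.I_mul_re]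
        ring
    _ = _ := by rw [im_ft hM]

lemma tendsto_setIntegral_iteratedDeriv_re_ft_div (M : ℕ) (hf : Integrable f)
    (hmom : Integrable fun θ ↦ θ ^ (2 * M + 2) * f θ) :
    Tendsto (fun T ↦ ∫ ω in Set.Ioc (0 : ℝ) T,
        iteratedDeriv (2 * M + 1) (fun ω' ↦ (ft f ω').re) ω / ω) atTop
      (𝓝 ((-1) ^ (M + 1) * (π / 2 * ∫ θ, |θ| ^ (2 * M + 1) * f θ))) := by
  have hM : Integrable fun θ ↦ θ ^ (2 * M + 1) * f θ :=
    integrable_pow_smul_of_le hf hmom (Nat.le_succ _)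
  have hM' : Integrable fun θ ↦ θ * (θ ^ (2 * M + 1) * f θ) := by
    simpa only [← mul_assoc, ← pow_succ'] using hmom
  simp_rw [iteratedDeriv_re_ft_odd M hf hM, mul_div_assoc, integral_const_mul,
    ← sign_mul_pow_of_odd (odd_two_mul_add_one M), mul_assoc (Real.sign _)]
  exact (tendsto_setIntegral_integral_sin_mul_div hM hM').const_mul _

end FourierTransform

theorem stmt_9_general (M : ℕ) (f : ℝ → ℝ) (hf_int : Integrable f)
    (hmom : Integrable (fun θ : ℝ => θ ^ (2 * M + 2) * f θ)) :
    ContDiff ℝ ((2 * M + 2 : ℕ) : ℕ∞) (ft f) ∧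
    (∀ ω : ℝ, iteratedDeriv (2 * M + 1) (fun ω' : ℝ => (ft f ω').re) (-ω) =
      -iteratedDeriv (2 * M + 1) (fun ω' : ℝ => (ft f ω').re) ω) ∧
    iteratedDeriv (2 * M + 1) (fun ω' : ℝ => (ft f ω').re) 0 = 0 ∧
    ∃ L : ℝ,
      Tendsto
        (fun T : ℝ => ∫ ω in Set.Ioc (0 : ℝ) T,
          iteratedDeriv (2 * M + 1) (fun ω' : ℝ => (ft f ω').re) ω / ω)
        atTop (nhds L) ∧
      (∫ θ : ℝ, |θ| ^ (2 * M + 1) * f θ) = (-1 : ℝ) ^ (M + 1) * (2 / Real.pi) * L ∧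
      ∃ c : ℝ,
        Tendsto
          (fun ω : ℝ => iteratedDeriv (2 * M + 1) (fun ω' : ℝ => (ft f ω').re) ω / ω)
          (nhdsWithin 0 (Set.Ioi 0)) (nhds c) := by
  have hM : Integrable fun θ ↦ θ ^ (2 * M + 1) * f θ :=
    integrable_pow_smul_of_le hf_int hmom (Nat.le_succ _)
  have hderiv := iteratedDeriv_re_ft_odd M hf_int hM
  have hzero : iteratedDeriv (2 * M + 1) (fun ω' ↦ (ft f ω').re) 0 = 0 := by simp [hderiv]
  have hsmooth : ContDiff ℝ (2 * M + 2 : ℕ) (ft f) := contDiff_ft hf_int hmom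
  have hdiff : DifferentiableAt ℝ (iteratedDeriv (2 * M + 1) fun ω' ↦ (ft f ω').re) 0 :=
    (Complex.reCLM.contDiff.comp hsmooth).differentiable_iteratedDeriv _
      (Nat.cast_lt.mpr (Nat.lt_succ_self _)) 0
  have hslope := hdiff.hasDerivAt.tendsto_slope_zero_right
  simp only [zero_add, hzero, sub_zero, smul_eq_mul, ← div_eq_inv_mul] at hslope
  refine ⟨mod_cast hsmooth, fun ω ↦ ?_, hzero, _,
    tendsto_setIntegral_iteratedDeriv_re_ft_div M hf_int hmom, ?_, _, hslope⟩
  · simp [hderiv, integral_neg]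
  · rcases neg_one_pow_eq_or ℝ (M + 1) with h | h <;> rw [h] <;> field_simp

theorem stmt_9 (M : ℕ) (f : ℝ → ℝ)
    (hf_nonneg : ∀ x, 0 ≤ f x) (hf_int : Integrable f) (hf_one : (∫ x, f x) = 1)
    (hmom : Integrable (fun θ : ℝ => θ ^ (2 * M + 2) * f θ)) :
    ContDiff ℝ ((2 * M + 2 : ℕ) : ℕ∞) (ft f) ∧
    (∀ ω : ℝ, iteratedDeriv (2 * M + 1) (fun ω' : ℝ => (ft f ω').re) (-ω) =
      -iteratedDeriv (2 * M + 1) (fun ω' : ℝ => (ft f ω').re) ω) ∧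
    iteratedDeriv (2 * M + 1) (fun ω' : ℝ => (ft f ω').re) 0 = 0 ∧
    ∃ L : ℝ,
      Tendsto
        (fun T : ℝ => ∫ ω in Set.Ioc (0 : ℝ) T,
          iteratedDeriv (2 * M + 1) (fun ω' : ℝ => (ft f ω').re) ω / ω)
        atTop (nhds L) ∧
      (∫ θ : ℝ, |θ| ^ (2 * M + 1) * f θ) = (-1 : ℝ) ^ (M + 1) * (2 / Real.pi) * L ∧
      ∃ c : ℝ,
        Tendsto
          (fun ω : ℝ => iteratedDeriv (2 * M + 1) (fun ω' : ℝ => (ft f ω').re) ω / ω)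
          (nhdsWithin 0 (Set.Ioi 0)) (nhds c) :=
  stmt_9_general M f hf_int hmom
end

section
/- In the sparse deconvolution model with μ_n = n^{ν−1} for some ν > 1/2, suppose: g is bounded above; |g*(ω)| ≤ C_{g2} (ω²+1)^{−α/2} exp(−γ|ω|^β) for all ω with C_{g2} > 0, α ≥ 0, γ > 0, β > 0; |φ*(ω)| ≥ C_{φ1} (ω²+1)^{−a/2} for all ω with C_{φ1} > 0, a ∈ ℝ; g* is differentiable with |(g*)'(ω)| ≤ C_g |g*(ω)| (1+|ω|)^τ for some τ ≥ 0; and there exists ω_0 > 0 such that ρ(ω) = arg(φ*(ω)) is twice continuously differentiable for |ω| > ω_0 with |ρ(ω)|, |ρ'(ω)|, |ρ''(ω)| ≤ ρ̄ < ∞. Then for all s ≥ 0, B > 0 there is a constant C > 0 (independent of n) such that, for all sufficiently large n, R_{n,μ_n}(Ω_s(B)) = inf over measurable estimators T of (Y_1,…,Y_n) of sup over probability densities f₀ ∈ Ω_s(B) (with ∫ |f₀*(ω) φ*(ω)| dω < ∞) of E(T − Φ_μ)² satisfies R_{n,μ_n}(Ω_s(B)) ≥ C · (log n)^{−(2s+2a−1)/β}.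 -/
open MeasureTheory Finset

/-!
Le Cam's two-point method. A supersmooth error law damps frequencies `|ω| ≥ M` by `exp (-γ M ^ β)`,
so two priors that differ only there are nearly indistinguishable after convolution, while their
functionals may differ by a power of `M`. The priors are `q + k` and `q - k`, with `k` smoothed by
`N(0, M⁻²)`. The spectrum of `k` is `δ` times a bump on `M ≤ |ω| ≤ 2 M`, rotated by the phase of
`φ*` so that the integral of `k* · φ*` suffers no cancellation: the separation is of order
`δ M ^ (1 - a)`. For positivity `q` contains `|k|`, which is not smooth, and is therefore convolved,
like `k`, with `N(0, M⁻²)`: this makes it Sobolev without damping the band by more than a constant.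
A weighted Plancherel inequality bounds the `L¹` norms of `k` and of `g ∗ k` by the derivatives of
their spectra, and hence of the phase and of `g*`. With `δ = ε M ^ (-s - 1/2)` both priors lie in
the Sobolev ball, and `M ^ β = (2 / γ) log n` makes the `n`-fold products of the observation
densities asymptotically indistinguishable.
-/

open scoped FourierTransform Convolution NNReal ENNReal
open ProbabilityTheory (gaussianPDFReal)

theorem integral_norm_sq_eq_eLpNorm_sq {α F : Type*} [MeasurableSpace α] [NormedAddCommGroup F]
    {μ : Measure α} {u : α → F} (hu : MemLp u 2 μ) :
    ∫ x, ‖u x‖ ^ 2 ∂μ = (eLpNorm u 2 μ).toReal ^ 2 := by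
  have h0 : 0 ≤ ∫ x, ‖u x‖ ^ 2 ∂μ := by positivity
  rw [hu.eLpNorm_eq_integral_rpow_norm (by norm_num) (by norm_num),
    ENNReal.toReal_ofReal (by positivity)]
  simp only [ENNReal.toReal_ofNat, Real.rpow_ofNat]
  rw [← Real.rpow_natCast, ← Real.rpow_mul h0]
  norm_num

theorem continuous_fourier {E F : Type*} [NormedAddCommGroup E] [InnerProductSpace ℝ E]
    [FiniteDimensional ℝ E] [MeasurableSpace E] [BorelSpace E] [NormedAddCommGroup F]
    [NormedSpace ℂ F] {u : E → F} (hu : Integrable u) : Continuous (𝓕 u) :=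
  VectorFourier.fourierIntegral_continuous Real.continuous_fourierChar
    (by exact continuous_inner) hu

section Plancherel

variable {E F : Type*} [NormedAddCommGroup E] [InnerProductSpace ℝ E] [FiniteDimensional ℝ E]
  [MeasurableSpace E] [BorelSpace E] [NormedAddCommGroup F] [InnerProductSpace ℂ F]
  [CompleteSpace F] {u : E → F}

/- Both sides define the same tempered distribution. -/
theorem fourier_ae_eq_fourier_toLp (hu : Integrable u) (hu₂ : MemLp u 2) :
    𝓕 u =ᵐ[volume] (𝓕 (hu₂.toLp u) : Lp (α := E) F 2 volume) := by
  refine ae_eq_of_integral_contDiff_smul_eq (continuous_fourier hu).locallyIntegrable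
    ((Lp.memLp _).locallyIntegrable (by norm_num)) fun ψ hψ hψ_supp ↦ ?_
  let S := (hψ_supp.comp_left (g := Complex.ofReal) (by simp)).toSchwartzMap
    (Complex.ofRealCLM.contDiff.comp hψ)
  have swap_L2 : ∫ x, ψ x • (𝓕 (hu₂.toLp u) : Lp (α := E) F 2 volume) x =
      ∫ x, (𝓕 S) x • (hu₂.toLp u) x := by
    have h := DFunLike.congr_fun (Lp.fourier_toTemperedDistribution_eq (hu₂.toLp u)) S
    simp only [TemperedDistribution.fourier_apply, Lp.toTemperedDistribution_apply] at h
    rw [h]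
    rfl
  have swap_L1 : ∫ x, ψ x • 𝓕 u x = ∫ x, 𝓕 (S : E → ℂ) x • u x := by
    have h := VectorFourier.integral_fourierIntegral_smul_eq_flip (e := Real.fourierChar)
      (L := innerₗ E) (μ := volume) (ν := volume) (f := S) (g := u)
      Real.continuous_fourierChar (by exact continuous_inner) S.integrable hu
    rw [flip_innerₗ] at h
    exact h.symm
  rw [swap_L2, swap_L1]
  refine integral_congr_ae ?_
  filter_upwards [hu₂.coeFn_toLp] with x hx
  rw [hx, SchwartzMap.fourier_coe]

theorem memLp_fourier (hu : Integrable u) (hu₂ : MemLp u 2) : MemLp (𝓕 u) 2 :=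
  (memLp_congr_ae (fourier_ae_eq_fourier_toLp hu hu₂)).2 (Lp.memLp _)

theorem integral_norm_sq_fourier (hu : Integrable u) (hu₂ : MemLp u 2) :
    ∫ x, ‖𝓕 u x‖ ^ 2 = ∫ x, ‖u x‖ ^ 2 := by
  have h := Lp.norm_fourier_eq (hu₂.toLp u)
  rw [Lp.norm_def, Lp.norm_toLp, ← eLpNorm_congr_ae (fourier_ae_eq_fourier_toLp hu hu₂)] at h
  rw [integral_norm_sq_eq_eLpNorm_sq (memLp_fourier hu hu₂), h, integral_norm_sq_eq_eLpNorm_sq hu₂]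

end Plancherel

section FourierIntegrability

variable {E F : Type*} [NormedAddCommGroup E] [NormedAddCommGroup F] [InnerProductSpace ℂ F]
  [CompleteSpace F]

theorem integral_inv_one_add_two_pi_mul_sq :
    ∫ ξ : ℝ, (1 + (2 * Real.pi * ξ) ^ 2)⁻¹ = 1 / 2 := by
  rw [Measure.integral_comp_mul_left (fun ξ : ℝ ↦ (1 + ξ ^ 2)⁻¹) (2 * Real.pi),
    integral_univ_inv_one_add_sq, abs_of_pos (by positivity), smul_eq_mul]
  field_simp

/- Young's inequality against the weight `1 + (2πξ)²`, whose inverse has mass `1 / 2`. -/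
theorem integrable_of_integrable_weighted_norm_sq {G : ℝ → E} (hG : AEStronglyMeasurable G)
    {l : ℝ} (hl : 0 < l) (hint : Integrable fun ξ ↦ ‖G ξ‖ ^ 2 * (1 + (2 * Real.pi * ξ) ^ 2))
    (hle : ∫ ξ, ‖G ξ‖ ^ 2 * (1 + (2 * Real.pi * ξ) ^ 2) ≤ l ^ 2) :
    Integrable G ∧ ∫ ξ, ‖G ξ‖ ≤ l := by
  have hinv : Integrable fun ξ : ℝ ↦ (1 + (2 * Real.pi * ξ) ^ 2)⁻¹ :=
    integrable_inv_one_add_sq.comp_mul_left' (by positivity)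
  have hmajor : Integrable fun ξ : ℝ ↦ 1 / 2 * (l * (1 + (2 * Real.pi * ξ) ^ 2)⁻¹ +
      ‖G ξ‖ ^ 2 * (1 + (2 * Real.pi * ξ) ^ 2) * l⁻¹) :=
    ((hinv.const_mul l).add (hint.mul_const _)).const_mul _
  have young : ∀ ξ, ‖G ξ‖ ≤ 1 / 2 * (l * (1 + (2 * Real.pi * ξ) ^ 2)⁻¹ +
      ‖G ξ‖ ^ 2 * (1 + (2 * Real.pi * ξ) ^ 2) * l⁻¹) := by
    intro ξ
    have hw : 0 < 1 + (2 * Real.pi * ξ) ^ 2 := by positivity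
    generalize 1 + (2 * Real.pi * ξ) ^ 2 = w at hw
    rw [← sub_nonneg, show 1 / 2 * (l * w⁻¹ + ‖G ξ‖ ^ 2 * w * l⁻¹) - ‖G ξ‖ =
      (l - ‖G ξ‖ * w) ^ 2 / (2 * l * w) by field_simp; ring]
    positivity
  have hG_int : Integrable G := hmajor.mono' hG (.of_forall young)
  refine ⟨hG_int, (integral_mono hG_int.norm hmajor young).trans ?_⟩
  rw [integral_const_mul, integral_add (hinv.const_mul l) (hint.mul_const _), integral_const_mul,
    integral_mul_const, integral_inv_one_add_two_pi_mul_sq]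
  have : (∫ ξ, ‖G ξ‖ ^ 2 * (1 + (2 * Real.pi * ξ) ^ 2)) * l⁻¹ ≤ l := by
    rw [← div_eq_mul_inv, div_le_iff₀ hl]
    linarith
  linarith

theorem integral_norm_sq_le_of_support_subset_Icc {u : ℝ → E} {b c A : ℝ}
    (hbc : b ≤ c) (hsupp : Function.support u ⊆ Set.Icc b c)
    (hA : ∀ x, ‖u x‖ ≤ A) : ∫ x, ‖u x‖ ^ 2 ≤ (c - b) * A ^ 2 := by
  calc ∫ x, ‖u x‖ ^ 2 ≤ ∫ x, (Set.Icc b c).indicator (fun _ ↦ A ^ 2) x := by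
        refine integral_mono_of_nonneg (.of_forall fun x ↦ by positivity)
          ((integrable_indicator_iff measurableSet_Icc).2 (by simp)) (.of_forall fun x ↦ ?_)
        by_cases hx : x ∈ Set.Icc b c
        · simpa only [Set.indicator_of_mem hx] using pow_le_pow_left₀ (norm_nonneg _) (hA x) 2
        · simp [Set.indicator_of_notMem hx, Function.notMem_support.1 fun h ↦ hx (hsupp h)]
    _ = (c - b) * A ^ 2 := by
        rw [integral_indicator measurableSet_Icc, setIntegral_const, smul_eq_mul,
          Real.volume_real_Icc_of_le hbc]

variable {u : ℝ → F} {b c A A' : ℝ}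

theorem integrable_fourier_of_support_subset_Icc (hu : Differentiable ℝ u) (hbc : b < c)
    (hsupp : Function.support u ⊆ Set.Icc b c) (hApos : 0 < A) (hA : ∀ x, ‖u x‖ ≤ A)
    (hA' : ∀ x, ‖deriv u x‖ ≤ A') :
    Integrable (𝓕 u) ∧ ∫ ξ, ‖𝓕 u ξ‖ ≤ √(c - b) * (A + A') := by
  have hcs : HasCompactSupport u := .of_support_subset_isCompact isCompact_Icc hsupp
  have hsupp' : Function.support (deriv u) ⊆ Set.Icc b c :=
    support_deriv_subset.trans (closure_minimal hsupp isClosed_Icc)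
  have hLp (p) : MemLp u p :=
    hcs.memLp_of_bound hu.continuous.aestronglyMeasurable A (.of_forall hA)
  have hLp' (p) : MemLp (deriv u) p :=
    hcs.deriv.memLp_of_bound (aestronglyMeasurable_deriv u _) A' (.of_forall hA')
  have hint := memLp_one_iff_integrable.1 (hLp 1)
  have hint' := memLp_one_iff_integrable.1 (hLp' 1)
  have hweight (ξ) : ‖𝓕 u ξ‖ ^ 2 * (1 + (2 * Real.pi * ξ) ^ 2) =
      ‖𝓕 u ξ‖ ^ 2 + ‖𝓕 (deriv u) ξ‖ ^ 2 := by
    rw [Real.fourier_deriv hint hu hint']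
    simp only [norm_smul, norm_mul, Complex.norm_I, Complex.norm_real, Complex.norm_ofNat,
      Real.norm_eq_abs, mul_pow, sq_abs]
    ring
  have hsq := (memLp_fourier hint (hLp 2)).norm.integrable_sq
  have hsq' := (memLp_fourier hint' (hLp' 2)).norm.integrable_sq
  have hA'0 : 0 ≤ A' := (norm_nonneg _).trans (hA' 0)
  refine integrable_of_integrable_weighted_norm_sq (continuous_fourier hint).aestronglyMeasurable
    (mul_pos (Real.sqrt_pos.2 (sub_pos.2 hbc)) (by positivity)) ?_ ?_
  · exact (hsq.add hsq').congr (.of_forall fun ξ ↦ (hweight ξ).symm)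
  simp only [hweight]
  rw [integral_add hsq hsq', integral_norm_sq_fourier hint (hLp 2),
    integral_norm_sq_fourier hint' (hLp' 2), mul_pow, Real.sq_sqrt (by linarith)]
  have := integral_norm_sq_le_of_support_subset_Icc hbc.le hsupp hA
  have := integral_norm_sq_le_of_support_subset_Icc hbc.le hsupp' hA'
  nlinarith [mul_nonneg (sub_pos.2 hbc).le (mul_nonneg hApos.le hA'0)]

theorem integral_norm_fourier_mul_le {u h : ℝ → ℂ} {H H' : ℝ} (hu : Differentiable ℝ u)
    (hh : Differentiable ℝ h) (hbc : b < c) (hsupp : Function.support u ⊆ Set.Icc b c)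
    (hApos : 0 < A) (hA : ∀ x, ‖u x‖ ≤ A) (hA' : ∀ x, ‖deriv u x‖ ≤ A') (hHpos : 0 < H)
    (hH : ∀ x ∈ Set.Icc b c, ‖h x‖ ≤ H) (hH' : ∀ x ∈ Set.Icc b c, ‖deriv h x‖ ≤ H') :
    Integrable (𝓕 fun x ↦ u x * h x) ∧
      ∫ ξ, ‖𝓕 (fun x ↦ u x * h x) ξ‖ ≤ √(c - b) * (A * H + (A' * H + A * H')) := by
  have hA'0 : 0 ≤ A' := (norm_nonneg _).trans (hA' 0)
  have hH'0 : 0 ≤ H' := (norm_nonneg _).trans (hH' b (Set.left_mem_Icc.2 hbc.le))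
  have hu_out {x} (hx : x ∉ Set.Icc b c) : u x = 0 :=
    Function.notMem_support.1 fun h ↦ hx (hsupp h)
  have hu'_out {x} (hx : x ∉ Set.Icc b c) : deriv u x = 0 := Function.notMem_support.1 fun h ↦
    hx (closure_minimal hsupp isClosed_Icc (support_deriv_subset h))
  refine integrable_fourier_of_support_subset_Icc (hu.mul hh) hbc
    ((Function.support_mul_subset_left _ _).trans hsupp) (by positivity) (fun x ↦ ?_) fun x ↦ ?_
  · by_cases hx : x ∈ Set.Icc b c
    · rw [norm_mul]
      exact mul_le_mul (hA x) (hH x hx) (norm_nonneg _) hApos.le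
    · simpa [hu_out hx] using by positivity
  · rw [deriv_fun_mul (hu x) (hh x)]
    by_cases hx : x ∈ Set.Icc b c
    · refine (norm_add_le _ _).trans ?_
      rw [norm_mul, norm_mul]
      exact add_le_add (mul_le_mul (hA' x) (hH x hx) (norm_nonneg _) hA'0)
        (mul_le_mul (hA x) (hH' x hx) (norm_nonneg _) hApos.le)
    · simpa [hu_out hx, hu'_out hx] using by positivity

end FourierIntegrability

section FourierOfReal

variable {s t : ℝ → ℝ}

theorem ft_eq_fourier (t : ℝ → ℝ) (ω : ℝ) :
    ft t ω = 𝓕 (fun x ↦ (t x : ℂ)) (-ω / (2 * Real.pi)) := by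
  rw [Real.fourier_real_eq_integral_exp_smul, ft]
  congr! 3 with x
  push_cast
  field_simp

theorem norm_exp_I_mul_ofReal_mul_ofReal (ω x : ℝ) :
    ‖Complex.exp (Complex.I * (ω : ℂ) * (x : ℂ))‖ = 1 := by
  rw [← Complex.norm_exp_ofReal_mul_I (ω * x)]
  congr 2
  push_cast
  ring

theorem integrable_exp_mul {f : ℝ → ℂ} (hf : Integrable f) (ω : ℝ) :
    Integrable fun x : ℝ ↦ Complex.exp (Complex.I * (ω : ℂ) * (x : ℂ)) * f x :=
  hf.bdd_mul (c := 1) (Continuous.aestronglyMeasurable (by fun_prop))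
    (.of_forall fun x ↦ (norm_exp_I_mul_ofReal_mul_ofReal ω x).le)

theorem ft_add (hs : Integrable s) (ht : Integrable t) (ω : ℝ) :
    ft (fun x ↦ s x + t x) ω = ft s ω + ft t ω := by
  unfold ft
  simp only [Complex.ofReal_add, mul_add]
  exact integral_add (integrable_exp_mul hs.ofReal ω) (integrable_exp_mul ht.ofReal ω)

theorem ft_const_mul (c : ℝ) (t : ℝ → ℝ) (ω : ℝ) : ft (fun x ↦ c * t x) ω = c * ft t ω := by
  unfold ft
  rw [← integral_const_mul]
  simp only [Complex.ofReal_mul, mul_left_comm]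

theorem continuous_ft (ht : Integrable t) : Continuous (ft t) := by
  have := continuous_fourier (u := fun x ↦ (t x : ℂ)) ht.ofReal
  simp only [funext (ft_eq_fourier t)]
  fun_prop

theorem norm_ft_le (t : ℝ → ℝ) (ω : ℝ) : ‖ft t ω‖ ≤ ∫ x, |t x| := by
  refine (norm_integral_le_integral_norm _).trans_eq ?_
  simp [norm_exp_I_mul_ofReal_mul_ofReal]

theorem ft_neg (t : ℝ → ℝ) (ω : ℝ) : ft t (-ω) = (starRingEnd ℂ) (ft t ω) := by
  unfold ft
  rw [← integral_conj]
  simp [← Complex.exp_conj]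

theorem integrable_of_ft_ne_zero {ω : ℝ} (h : ft t ω ≠ 0) : Integrable t := by
  have h_exp : Integrable fun x : ℝ ↦
      Complex.exp (Complex.I * (ω : ℂ) * (x : ℂ)) * (t x : ℂ) := .of_integral_ne_zero h
  refine (integrable_exp_mul h_exp (-ω)).re.congr (.of_forall fun x ↦ ?_)
  simp [← mul_assoc, ← Complex.exp_add]

theorem norm_sq_ft_eq_comp_mul (t : ℝ → ℝ) (ω : ℝ) :
    ‖ft t ω‖ ^ 2 = ‖𝓕 (fun x ↦ (t x : ℂ)) (-(2 * Real.pi)⁻¹ * ω)‖ ^ 2 := by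
  rw [ft_eq_fourier]
  congr 3
  field_simp

theorem integrable_norm_sq_ft (ht : Integrable t) (ht₂ : MemLp t 2) :
    Integrable fun ω ↦ ‖ft t ω‖ ^ 2 := by
  simp only [norm_sq_ft_eq_comp_mul]
  exact (memLp_fourier (u := fun x ↦ (t x : ℂ)) ht.ofReal ht₂.ofReal).norm.integrable_sq
    |>.comp_mul_left' (by simp [Real.pi_ne_zero])

theorem integral_norm_sq_ft (ht : Integrable t) (ht₂ : MemLp t 2) :
    ∫ ω, ‖ft t ω‖ ^ 2 = 2 * Real.pi * ∫ x, t x ^ 2 := by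
  simp only [norm_sq_ft_eq_comp_mul]
  rw [Measure.integral_comp_mul_left fun ω ↦ ‖𝓕 (fun x ↦ (t x : ℂ)) ω‖ ^ 2,
    integral_norm_sq_fourier (u := fun x ↦ (t x : ℂ)) ht.ofReal ht₂.ofReal]
  simp [abs_of_pos Real.pi_pos]

theorem ft_convolution (hs : Integrable s) (ht : Integrable t) (ω : ℝ) :
    ft (s ⋆ t) ω = ft s ω * ft t ω := by
  have hcast : (fun x ↦ ((s ⋆ t) x : ℂ)) =
      (fun x ↦ (s x : ℂ)) ⋆[ContinuousLinearMap.mul ℂ ℂ] fun x ↦ (t x : ℂ) := by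
    ext x
    simp only [MeasureTheory.convolution, ← integral_complex_ofReal]
    simp
  rw [ft_eq_fourier, ft_eq_fourier, ft_eq_fourier, hcast]
  exact Real.fourier_mul_convolution_eq hs.ofReal ht.ofReal _

theorem ft_gaussianPDFReal {v : ℝ≥0} (hv : v ≠ 0) (ω : ℝ) :
    ft (gaussianPDFReal 0 v) ω = (Real.exp (-(v * ω ^ 2 / 2)) : ℝ) := by
  have h := ProbabilityTheory.charFun_gaussianReal (μ := 0) (v := v) ω
  rw [charFun_apply_real, ProbabilityTheory.integral_gaussianReal_eq_integral_smul hv] at h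
  convert h using 1
  · unfold ft
    congr! 2 with x
    rw [Complex.real_smul, mul_comm]
    ring_nf
  · push_cast
    ring_nf

theorem norm_ft_gaussianPDFReal {v : ℝ≥0} (hv : v ≠ 0) (ω : ℝ) :
    ‖ft (gaussianPDFReal 0 v) ω‖ = Real.exp (-(v * ω ^ 2 / 2)) := by
  rw [ft_gaussianPDFReal hv, Complex.norm_real, Real.norm_eq_abs, Real.abs_exp]

end FourierOfReal

/-- Real part of the inverse Fourier transform with the normalisation of `ft`, doubled so that
`realInvFt u` has transform `ω ↦ u ω + conj (u (-ω))`. It turns a complex spectrum into a real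
function. -/
noncomputable def realInvFt (u : ℝ → ℂ) (x : ℝ) : ℝ :=
  1 / Real.pi * (𝓕 u (x / (2 * Real.pi))).re

section RealInverseFourier

variable {u : ℝ → ℂ}

theorem continuous_realInvFt (hu : Integrable u) : Continuous (realInvFt u) := by
  have := continuous_fourier hu
  unfold realInvFt
  fun_prop

theorem abs_realInvFt_le (u : ℝ → ℂ) (x : ℝ) :
    |realInvFt u x| ≤ 1 / Real.pi * ‖𝓕 u (x / (2 * Real.pi))‖ := by
  rw [realInvFt, abs_mul, abs_of_pos (by positivity)]
  gcongr
  exact Complex.abs_re_le_norm _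

theorem integrable_realInvFt (hu : Integrable (𝓕 u)) : Integrable (realInvFt u) :=
  (hu.comp_div Real.two_pi_pos.ne').re.const_mul _

theorem integral_abs_realInvFt_le (hu : Integrable (𝓕 u)) :
    ∫ x, |realInvFt u x| ≤ 2 * ∫ ξ, ‖𝓕 u ξ‖ := by
  calc ∫ x, |realInvFt u x| ≤ ∫ x, 1 / Real.pi * ‖𝓕 u (x / (2 * Real.pi))‖ :=
        integral_mono (integrable_realInvFt hu).abs
          ((hu.comp_div Real.two_pi_pos.ne').norm.const_mul _) (abs_realInvFt_le u)
    _ = 2 * ∫ ξ, ‖𝓕 u ξ‖ := by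
        rw [integral_const_mul, Measure.integral_comp_div fun ξ ↦ ‖𝓕 u ξ‖,
          abs_of_pos Real.two_pi_pos, smul_eq_mul]
        field_simp

theorem memLp_realInvFt (hu : Integrable u) (hu₂ : MemLp u 2) : MemLp (realInvFt u) 2 := by
  refine (memLp_two_iff_integrable_sq (continuous_realInvFt hu).aestronglyMeasurable).2 ?_
  refine (((memLp_fourier hu hu₂).norm.integrable_sq.comp_div Real.two_pi_pos.ne').const_mul
    ((1 / Real.pi) ^ 2)).mono' ((continuous_realInvFt hu).pow 2).aestronglyMeasurable
    (.of_forall fun x ↦ ?_)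
  rw [norm_pow, Real.norm_eq_abs, ← mul_pow]
  exact pow_le_pow_left₀ (abs_nonneg _) (abs_realInvFt_le u x) 2

theorem integral_realInvFt_sq_le (hu : Integrable u) (hu₂ : MemLp u 2) :
    ∫ x, realInvFt u x ^ 2 ≤ 2 / Real.pi * ∫ ω, ‖u ω‖ ^ 2 := by
  calc ∫ x, realInvFt u x ^ 2
      ≤ ∫ x, (1 / Real.pi) ^ 2 * ‖𝓕 u (x / (2 * Real.pi))‖ ^ 2 := by
        refine integral_mono (memLp_realInvFt hu hu₂).integrable_sq
          (((memLp_fourier hu hu₂).norm.integrable_sq.comp_div Real.two_pi_pos.ne').const_mul _)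
          fun x ↦ ?_
        rw [← sq_abs, ← mul_pow]
        exact pow_le_pow_left₀ (abs_nonneg _) (abs_realInvFt_le u x) 2
    _ = 2 / Real.pi * ∫ ω, ‖u ω‖ ^ 2 := by
        rw [integral_const_mul, Measure.integral_comp_div fun ξ ↦ ‖𝓕 u ξ‖ ^ 2,
          abs_of_pos Real.two_pi_pos, integral_norm_sq_fourier hu hu₂, smul_eq_mul]
        field_simp

theorem integral_exp_mul_fourier (hc : Continuous u) (hu : Integrable u) (hu' : Integrable (𝓕 u))
    (ω : ℝ) : ∫ x : ℝ, Complex.exp (Complex.I * (ω : ℂ) * (x : ℂ)) * 𝓕 u (x / (2 * Real.pi)) =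
      2 * Real.pi * u ω := by
  have inversion := congrFun (hc.fourierInv_fourier_eq hu hu') ω
  rw [Real.fourierInv_eq'] at inversion
  have rescale (x : ℝ) :
      Complex.exp (Complex.I * (ω : ℂ) * (x : ℂ)) * 𝓕 u (x / (2 * Real.pi)) =
        (fun v : ℝ ↦ Complex.exp (↑(2 * Real.pi * inner ℝ v ω) * Complex.I) • 𝓕 u v)
          (x / (2 * Real.pi)) := by
    simp only [smul_eq_mul]
    congr 2
    simp
    field_simp
  simp only [rescale]
  rw [Measure.integral_comp_div fun v : ℝ ↦
    Complex.exp (↑(2 * Real.pi * inner ℝ v ω) * Complex.I) • 𝓕 u v, inversion,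
    abs_of_pos Real.two_pi_pos, Complex.real_smul]
  push_cast
  rfl

theorem ft_realInvFt (hc : Continuous u) (hu : Integrable u) (hu' : Integrable (𝓕 u)) (ω : ℝ) :
    ft (realInvFt u) ω = u ω + (starRingEnd ℂ) (u (-ω)) := by
  let e (ξ x : ℝ) : ℂ :=
    Complex.exp (Complex.I * (ξ : ℂ) * (x : ℂ)) * 𝓕 u (x / (2 * Real.pi))
  have he_int (ξ : ℝ) : Integrable (e ξ) :=
    integrable_exp_mul (hu'.comp_div Real.two_pi_pos.ne') ξ
  have he_conj_int : Integrable fun x ↦ (starRingEnd ℂ) (e (-ω) x) :=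
    Complex.conjCLE.integrable_comp_iff.2 (he_int _)
  have split (x : ℝ) : Complex.exp (Complex.I * (ω : ℂ) * (x : ℂ)) * (realInvFt u x : ℂ) =
      1 / (2 * Real.pi) * (e ω x + (starRingEnd ℂ) (e (-ω) x)) := by
    simp only [realInvFt, e]
    push_cast
    rw [Complex.re_eq_add_conj, map_mul, ← Complex.exp_conj]
    simp only [map_mul, map_neg, Complex.conj_I, Complex.conj_ofReal]
    field_simp
  unfold ft
  simp only [split]
  rw [integral_const_mul, integral_add (he_int ω) he_conj_int, integral_conj,
    integral_exp_mul_fourier hc hu hu', integral_exp_mul_fourier hc hu hu']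
  simp only [map_mul, Complex.conj_ofReal, Complex.conj_ofNat]
  field_simp

theorem integral_realInvFt (hc : Continuous u) (hu : Integrable u) (hu' : Integrable (𝓕 u))
    (h0 : u 0 = 0) : ∫ x, realInvFt u x = 0 := by
  have h := ft_realInvFt hc hu hu' 0
  simp only [ft, neg_zero, h0, map_zero, add_zero, Complex.ofReal_zero, mul_zero, zero_mul,
    Complex.exp_zero, one_mul, integral_complex_ofReal] at h
  exact_mod_cast h

theorem fourier_comp_sub_two_pi_mul (p : ℝ → ℝ) (x ω : ℝ) :
    𝓕 (fun η ↦ (p (x - 2 * Real.pi * η) : ℂ)) ω =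
      1 / (2 * Real.pi) * (Complex.exp (-(Complex.I * ω * x)) * ft p ω) := by
  let q (z : ℝ) : ℂ :=
    Complex.exp (-(Complex.I * ω * x)) * (Complex.exp (Complex.I * ω * z) * (p z : ℂ))
  have hq (η : ℝ) : Complex.exp (↑(-2 * Real.pi * η * ω) * Complex.I) •
      (p (x - 2 * Real.pi * η) : ℂ) = q (x - 2 * Real.pi * η) := by
    simp only [q, smul_eq_mul]
    rw [← mul_assoc, ← Complex.exp_add]
    congr 2
    push_cast
    ring
  rw [Real.fourier_real_eq_integral_exp_smul]
  simp only [hq]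
  rw [Measure.integral_comp_mul_left fun y ↦ q (x - y), integral_sub_left_eq_self q,
    integral_const_mul, ← ft, abs_of_pos (by positivity), Complex.real_smul]
  push_cast
  ring

theorem integral_mul_fourier_comp_div {p : ℝ → ℝ} (hp : Integrable p) (hu : Integrable u)
    (x : ℝ) : ∫ θ, (p (x - θ) : ℂ) * 𝓕 u (θ / (2 * Real.pi)) =
      𝓕 (fun ω ↦ u ω * ft p ω) (x / (2 * Real.pi)) := by
  have hp_int : Integrable fun η : ℝ ↦ (p (x - 2 * Real.pi * η) : ℂ) :=
    ((hp.comp_sub_left x).comp_mul_left' Real.two_pi_pos.ne').ofReal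
  have swap : ∫ η, 𝓕 u η • (p (x - 2 * Real.pi * η) : ℂ) =
      ∫ ω, u ω • 𝓕 (fun η : ℝ ↦ (p (x - 2 * Real.pi * η) : ℂ)) ω := by
    have h := VectorFourier.integral_fourierIntegral_smul_eq_flip (e := Real.fourierChar)
      (L := innerₗ ℝ) (μ := volume) (ν := volume) Real.continuous_fourierChar
      (by exact continuous_inner) hu hp_int
    rwa [flip_innerₗ] at h
  have hdiv (θ : ℝ) : x - 2 * Real.pi * (θ / (2 * Real.pi)) = x - θ := by field_simp
  have rescale := Measure.integral_comp_div
    (fun η ↦ 𝓕 u η • (p (x - 2 * Real.pi * η) : ℂ)) (2 * Real.pi)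
  simp only [hdiv, smul_eq_mul, mul_comm (𝓕 u _)] at rescale
  calc ∫ θ, (p (x - θ) : ℂ) * 𝓕 u (θ / (2 * Real.pi))
      = 2 * Real.pi * ∫ ω, u ω • 𝓕 (fun η : ℝ ↦ (p (x - 2 * Real.pi * η) : ℂ)) ω := by
        simp only [smul_eq_mul, mul_comm (𝓕 u _)] at swap
        rw [rescale, swap, abs_of_pos Real.two_pi_pos, Complex.real_smul]
        push_cast
        rfl
    _ = 𝓕 (fun ω ↦ u ω * ft p ω) (x / (2 * Real.pi)) := by
        rw [Real.fourier_real_eq_integral_exp_smul, ← integral_const_mul]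
        congr with ω
        rw [fourier_comp_sub_two_pi_mul, show (↑(-2 * Real.pi * ω * (x / (2 * Real.pi))) : ℂ) *
          Complex.I = -(Complex.I * ω * x) by push_cast; field_simp, smul_eq_mul, smul_eq_mul]
        field_simp

theorem convolution_realInvFt {p : ℝ → ℝ} (hp : Integrable p) (hu : Integrable u) :
    p ⋆ realInvFt u = realInvFt fun ω ↦ u ω * ft p ω := by
  ext x
  have hint : Integrable fun θ ↦ (p (x - θ) : ℂ) * 𝓕 u (θ / (2 * Real.pi)) :=
    (hp.comp_sub_left x).ofReal.mul_bdd (c := ∫ v, ‖u v‖)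
      ((continuous_fourier hu).comp (continuous_id.div_const _)).aestronglyMeasurable
      (.of_forall fun θ ↦ VectorFourier.norm_fourierIntegral_le_integral_norm _ _ _ _ _)
  have hre := integral_re hint
  simp only [RCLike.re_to_complex, Complex.re_ofReal_mul] at hre
  rw [convolution_lsmul_swap, realInvFt, ← integral_mul_fourier_comp_div hp hu, ← hre,
    ← integral_const_mul]
  congr with θ
  rw [realInvFt, smul_eq_mul]
  ring

end RealInverseFourier

/-- Quadratic risk of `T` as an estimator of `θ`, when the observations indexed by `ι` are
independent with density `q`. It is a lower integral, so that an infinite risk counts as `∞`. -/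
noncomputable def sqRisk {α ι E : Type*} [MeasureSpace α] [Fintype ι] [NormedAddCommGroup E]
    (q : α → ℝ) (T : (ι → α) → E) (θ : E) : ℝ≥0∞ :=
  ∫⁻ y, ENNReal.ofReal (‖T y - θ‖ ^ 2 * ∏ i, q (y i))

section TwoPoint

theorem one_sub_integral_abs_sub_le_integral_min {α : Type*} [MeasurableSpace α] {μ : Measure α}
    {p q : α → ℝ} (hp : Integrable p μ) (hq : Integrable q μ) (hp_one : ∫ x, p x ∂μ = 1) :
    1 - ∫ x, |p x - q x| ∂μ ≤ ∫ x, min (p x) (q x) ∂μ := by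
  have hd : Integrable (fun x ↦ |p x - q x|) μ := (hp.sub hq).abs
  rw [← hp_one, ← integral_sub hp hd]
  refine integral_mono (hp.sub hd) (hp.inf hq) fun x ↦ le_min ?_ ?_
  · exact sub_le_self _ (abs_nonneg _)
  · exact sub_le_comm.1 (le_abs_self _)

theorem half_sq_norm_sub_le_add {E : Type*} [NormedAddCommGroup E] (t a b : E) :
    ‖a - b‖ ^ 2 / 2 ≤ ‖t - a‖ ^ 2 + ‖t - b‖ ^ 2 := by
  have triangle : ‖a - b‖ ≤ ‖t - a‖ + ‖t - b‖ := by
    rw [norm_sub_rev t a]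
    exact norm_sub_le_norm_sub_add_norm_sub a t b
  nlinarith [norm_nonneg (a - b), sq_nonneg (‖t - a‖ - ‖t - b‖)]

variable {α ι E : Type*} [MeasureSpace α] [SigmaFinite (volume : Measure α)] [Fintype ι]
  [NormedAddCommGroup E] {p q : α → ℝ}

theorem half_le_integral_prod_min (hp : Integrable p) (hq : Integrable q)
    (hp_one : ∫ x, p x = 1)
    (hpq : Fintype.card ι * ∫ x, |p x - q x| ≤ 1 / 2) :
    1 / 2 ≤ ∫ y : ι → α, ∏ i, min (p (y i)) (q (y i)) := by
  rw [integral_fintype_prod_volume_eq_pow fun x ↦ min (p x) (q x)]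
  have hmin := one_sub_integral_abs_sub_le_integral_min hp hq hp_one
  have hdist_nonneg : 0 ≤ ∫ x, |p x - q x| := integral_nonneg fun x ↦ abs_nonneg _
  set t := ∫ x, |p x - q x|
  rcases Nat.eq_zero_or_pos (Fintype.card ι) with h | h
  · norm_num [h]
  have hcard : (1 : ℝ) ≤ Fintype.card ι := by exact_mod_cast h
  calc (1 / 2 : ℝ) ≤ 1 + Fintype.card ι * (-t) := by linarith
    _ ≤ (1 + (-t)) ^ Fintype.card ι := one_add_mul_le_pow (by nlinarith) _
    _ ≤ _ := pow_le_pow_left₀ (by nlinarith) (by linarith) _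

theorem ofReal_sq_norm_sub_div_four_le_sqRisk_add {T : (ι → α) → E}
    (hT : AEStronglyMeasurable T) (hp_nonneg : ∀ x, 0 ≤ p x) (hq_nonneg : ∀ x, 0 ≤ q x)
    (hp : Integrable p) (hq : Integrable q) (hp_one : ∫ x, p x = 1)
    (hpq : Fintype.card ι * ∫ x, |p x - q x| ≤ 1 / 2) (a b : E) :
    ENNReal.ofReal (‖a - b‖ ^ 2 / 4) ≤ sqRisk p T a + sqRisk q T b := by
  have hmin_nonneg (y : ι → α) : ∀ i ∈ univ, 0 ≤ min (p (y i)) (q (y i)) :=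
    fun i _ ↦ le_min (hp_nonneg _) (hq_nonneg _)
  have hprod_min_int : Integrable fun y : ι → α ↦ ∏ i, min (p (y i)) (q (y i)) :=
    Integrable.fintype_prod fun _ ↦ hp.inf hq
  have hprod_meas : AEStronglyMeasurable fun y : ι → α ↦ ∏ i, p (y i) :=
    (Integrable.fintype_prod fun _ ↦ hp).aestronglyMeasurable
  unfold sqRisk
  rw [← lintegral_add_left']
  swap
  · exact (((hT.sub aestronglyMeasurable_const).norm.pow 2).mul hprod_meas).aemeasurable
      |>.ennreal_ofReal
  calc ENNReal.ofReal (‖a - b‖ ^ 2 / 4)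
      ≤ ENNReal.ofReal (∫ y : ι → α, ‖a - b‖ ^ 2 / 2 * ∏ i, min (p (y i)) (q (y i))) := by
        refine ENNReal.ofReal_le_ofReal ?_
        rw [integral_const_mul]
        nlinarith [half_le_integral_prod_min hp hq hp_one hpq, sq_nonneg ‖a - b‖]
    _ = ∫⁻ y : ι → α, ENNReal.ofReal (‖a - b‖ ^ 2 / 2 * ∏ i, min (p (y i)) (q (y i))) :=
        ofReal_integral_eq_lintegral_ofReal (hprod_min_int.const_mul _) <|
          .of_forall fun y ↦ mul_nonneg (by positivity) (prod_nonneg (hmin_nonneg y))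
    _ ≤ _ := by
        refine lintegral_mono fun y ↦ ?_
        rw [← ENNReal.ofReal_add (mul_nonneg (by positivity) (prod_nonneg fun i _ ↦ hp_nonneg _))
          (mul_nonneg (by positivity) (prod_nonneg fun i _ ↦ hq_nonneg _))]
        refine ENNReal.ofReal_le_ofReal ?_
        calc _ ≤ (‖T y - a‖ ^ 2 + ‖T y - b‖ ^ 2) * ∏ i, min (p (y i)) (q (y i)) :=
              mul_le_mul_of_nonneg_right (half_sq_norm_sub_le_add _ a b)
                (prod_nonneg (hmin_nonneg y))
          _ ≤ _ := by
              rw [add_mul]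
              gcongr ?_ * ?_ + ?_ * ?_
              · exact prod_le_prod (hmin_nonneg y) fun i _ ↦ min_le_left _ _
              · exact prod_le_prod (hmin_nonneg y) fun i _ ↦ min_le_right _ _

theorem le_sqRisk_or_le_sqRisk {T : (ι → α) → E} (hT : AEStronglyMeasurable T)
    (hp_nonneg : ∀ x, 0 ≤ p x) (hq_nonneg : ∀ x, 0 ≤ q x) (hp : Integrable p)
    (hq : Integrable q) (hp_one : ∫ x, p x = 1)
    (hpq : Fintype.card ι * ∫ x, |p x - q x| ≤ 1 / 2) (a b : E) :
    ENNReal.ofReal (‖a - b‖ ^ 2 / 8) ≤ sqRisk p T a ∨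
      ENNReal.ofReal (‖a - b‖ ^ 2 / 8) ≤ sqRisk q T b := by
  by_contra! h
  refine (ENNReal.add_lt_add h.1 h.2).not_ge ?_
  rw [← ENNReal.ofReal_add (by positivity) (by positivity), ← add_div,
    show (‖a - b‖ ^ 2 + ‖a - b‖ ^ 2) / 8 = ‖a - b‖ ^ 2 / 4 by ring]
  exact ofReal_sq_norm_sub_div_four_le_sqRisk_add hT hp_nonneg hq_nonneg hp hq hp_one hpq a b

end TwoPoint

/-- Constant comparing the Sobolev weight `(ω² + 1)^s` with a Gaussian. -/
noncomputable def sobolevConst (s : ℝ) : ℝ := (⌈s⌉₊).factorial * Real.exp 1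

/-- Membership of `t` in the Sobolev ball `Ω_s(B)`. Integrability is part of the definition because
the integral of a non-integrable function is `0`. -/
def MemSobolevBall (s B : ℝ) (t : ℝ → ℝ) : Prop :=
  Integrable (fun ω ↦ ‖ft t ω‖ ^ 2 * (ω ^ 2 + 1) ^ s) ∧
    ∫ ω, ‖ft t ω‖ ^ 2 * (ω ^ 2 + 1) ^ s ≤ B ^ 2

section Sobolev

variable {s B c : ℝ} {t t' W : ℝ → ℝ}

theorem sobolevConst_pos (s : ℝ) : 0 < sobolevConst s := by
  unfold sobolevConst
  positivity

theorem rpow_le_sobolevConst_mul_exp {x : ℝ} (hx : 0 ≤ x) :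
    (1 + x) ^ s ≤ sobolevConst s * Real.exp x := by
  have h := Real.pow_div_factorial_le_exp (1 + x) (by positivity) ⌈s⌉₊
  rw [div_le_iff₀ (by positivity)] at h
  calc (1 + x) ^ s ≤ (1 + x) ^ ((⌈s⌉₊ : ℕ) : ℝ) :=
        Real.rpow_le_rpow_of_exponent_le (by linarith) (Nat.le_ceil s)
    _ = (1 + x) ^ ⌈s⌉₊ := Real.rpow_natCast _ _
    _ ≤ Real.exp (1 + x) * (⌈s⌉₊).factorial := h
    _ = sobolevConst s * Real.exp x := by rw [sobolevConst, Real.exp_add]; ring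

theorem exp_neg_mul_sq_mul_rpow_le (hs : 0 ≤ s) {w : ℝ} (hw : 0 < w) (hw_one : w ≤ 1) (ω : ℝ) :
    Real.exp (-(w * ω ^ 2)) * (ω ^ 2 + 1) ^ s ≤ sobolevConst s * w ^ (-s) := by
  have hbase : ω ^ 2 + 1 ≤ w⁻¹ * (1 + w * ω ^ 2) := by
    rw [mul_add, inv_mul_cancel_left₀ hw.ne', mul_one, add_comm]
    gcongr
    exact (one_le_inv₀ hw).2 hw_one
  calc Real.exp (-(w * ω ^ 2)) * (ω ^ 2 + 1) ^ s
      ≤ Real.exp (-(w * ω ^ 2)) * (w⁻¹ * (1 + w * ω ^ 2)) ^ s := by gcongr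
    _ = Real.exp (-(w * ω ^ 2)) * (w ^ (-s) * (1 + w * ω ^ 2) ^ s) := by
        rw [Real.mul_rpow (by positivity) (by positivity), Real.inv_rpow hw.le,
          Real.rpow_neg hw.le]
    _ ≤ Real.exp (-(w * ω ^ 2)) * (w ^ (-s) * (sobolevConst s * Real.exp (w * ω ^ 2))) := by
        gcongr
        exact rpow_le_sobolevConst_mul_exp (by positivity)
    _ = sobolevConst s * w ^ (-s) := by
        rw [Real.exp_neg]
        field_simp

theorem memSobolevBall_of_le {F : ℝ → ℝ} (ht : Integrable t) (hF : Integrable F)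
    (hle : ∀ ω, ‖ft t ω‖ ^ 2 * (ω ^ 2 + 1) ^ s ≤ F ω) (hB : ∫ ω, F ω ≤ B ^ 2) :
    MemSobolevBall s B t := by
  have hcont := continuous_ft ht
  have hint : Integrable fun ω ↦ ‖ft t ω‖ ^ 2 * (ω ^ 2 + 1) ^ s :=
    hF.mono' (by fun_prop : Measurable _).aestronglyMeasurable <| .of_forall fun ω ↦ by
      rw [Real.norm_of_nonneg (by positivity)]
      exact hle ω
  exact ⟨hint, (integral_mono hint hF hle).trans hB⟩

theorem MemSobolevBall.const_mul (ht : Integrable t) (h : MemSobolevBall s B t) (hc : |c| ≤ 1) :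
    MemSobolevBall s B fun x ↦ c * t x := by
  refine memSobolevBall_of_le (ht.const_mul c) h.1 (fun ω ↦ ?_) h.2
  rw [ft_const_mul, norm_mul, Complex.norm_real, Real.norm_eq_abs]
  gcongr
  exact mul_le_of_le_one_left (norm_nonneg _) hc

theorem MemSobolevBall.add (ht : Integrable t) (ht' : Integrable t')
    (h : MemSobolevBall s (B / 2) t) (h' : MemSobolevBall s (B / 2) t') :
    MemSobolevBall s B fun x ↦ t x + t' x := by
  refine memSobolevBall_of_le (ht.add ht') ((h.1.add h'.1).const_mul 2) (fun ω ↦ ?_) ?_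
  · have hsq : ‖ft t ω + ft t' ω‖ ^ 2 ≤ 2 * (‖ft t ω‖ ^ 2 + ‖ft t' ω‖ ^ 2) :=
      (pow_le_pow_left₀ (norm_nonneg _) (norm_add_le _ _) 2).trans add_sq_le
    rw [ft_add ht ht', Pi.add_apply, ← add_mul, ← mul_assoc]
    gcongr
  · rw [integral_const_mul, integral_add' h.1 h'.1]
    nlinarith [h.2, h'.2]

theorem exists_memSobolevBall_gaussianPDFReal (hs : 0 ≤ s) (hB : 0 < B) :
    ∃ v : ℝ≥0, v ≠ 0 ∧ MemSobolevBall s B (gaussianPDFReal 0 v) := by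
  have hK := sobolevConst_pos s
  let b : ℝ := Real.pi * (sobolevConst s / B ^ 2) ^ 2
  have hb : 0 < b := by positivity
  obtain ⟨v, hvb⟩ : ∃ v : ℝ≥0, (v : ℝ) = 1 + b := CanLift.prf _ (by positivity)
  have hv : v ≠ 0 := NNReal.coe_ne_zero.1 (hvb ▸ by positivity)
  refine ⟨v, hv, memSobolevBall_of_le
    (ProbabilityTheory.integrable_gaussianPDFReal _ _)
    ((integrable_exp_neg_mul_sq hb).const_mul (sobolevConst s)) (fun ω ↦ ?_) ?_⟩
  · have hweight := exp_neg_mul_sq_mul_rpow_le hs one_pos le_rfl ω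
    rw [Real.one_rpow, mul_one, one_mul] at hweight
    calc ‖ft (gaussianPDFReal 0 _) ω‖ ^ 2 * (ω ^ 2 + 1) ^ s
        = Real.exp (-ω ^ 2) * (ω ^ 2 + 1) ^ s * Real.exp (-b * ω ^ 2) := by
          rw [norm_ft_gaussianPDFReal hv, ← Real.exp_nat_mul, mul_right_comm, ← Real.exp_add,
            hvb]
          congr 2
          push_cast
          ring
      _ ≤ sobolevConst s * Real.exp (-b * ω ^ 2) := by gcongr
  · rw [integral_const_mul, integral_gaussian, show Real.pi / b = (B ^ 2 / sobolevConst s) ^ 2 by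
      simp only [b]; field_simp, Real.sqrt_sq (by positivity)]
    exact (mul_div_cancel₀ _ hK.ne').le

theorem memSobolevBall_gaussianPDFReal_convolution (hs : 0 ≤ s) {w : ℝ≥0} (hw : w ≠ 0)
    (hw_one : w ≤ 1) (hW : Integrable W) (hW₂ : MemLp W 2)
    (hB : sobolevConst s * (w : ℝ) ^ (-s) * (2 * Real.pi * ∫ x, W x ^ 2) ≤ B ^ 2) :
    MemSobolevBall s B (gaussianPDFReal 0 w ⋆ W) := by
  have hΨ := ProbabilityTheory.integrable_gaussianPDFReal 0 w
  refine memSobolevBall_of_le (hΨ.integrable_convolution _ hW)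
    ((integrable_norm_sq_ft hW hW₂).const_mul (sobolevConst s * (w : ℝ) ^ (-s))) (fun ω ↦ ?_) ?_
  · rw [ft_convolution hΨ hW, norm_mul, norm_ft_gaussianPDFReal hw, mul_pow, ← Real.exp_nat_mul,
      mul_right_comm, show ((2 : ℕ) : ℝ) * -(w * ω ^ 2 / 2) = -(w * ω ^ 2) by push_cast; ring]
    exact mul_le_mul_of_nonneg_right (exp_neg_mul_sq_mul_rpow_le hs
      (NNReal.coe_pos.2 (pos_iff_ne_zero.2 hw)) (by exact_mod_cast hw_one) ω) (sq_nonneg _)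
  · rwa [integral_const_mul, integral_norm_sq_ft hW hW₂]

end Sobolev

/-- The mixture `(1 - ∫ W) · N(0, v) + N(0, w) ⋆ W`. It is a smooth probability density whenever
`W ≥ 0` has mass at most one, and perturbing `W` perturbs it at frequencies up to `w ^ (-1/2)`. -/
noncomputable def gaussianMixture (v w : ℝ≥0) (W : ℝ → ℝ) (x : ℝ) : ℝ :=
  (1 - ∫ y, W y) * gaussianPDFReal 0 v x + (gaussianPDFReal 0 w ⋆ W) x

section GaussianMixture

open ProbabilityTheory (integrable_gaussianPDFReal gaussianPDFReal_nonneg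
  integral_gaussianPDFReal_eq_one)

variable {v w : ℝ≥0} {W : ℝ → ℝ}

theorem gaussianMixture_nonneg (hW : ∀ x, 0 ≤ W x) (hW_one : ∫ x, W x ≤ 1) (x : ℝ) :
    0 ≤ gaussianMixture v w W x :=
  add_nonneg (mul_nonneg (sub_nonneg.2 hW_one) (gaussianPDFReal_nonneg _ _ _))
    (integral_nonneg fun _ ↦ mul_nonneg (gaussianPDFReal_nonneg _ _ _) (hW _))

theorem integrable_gaussianPDFReal_convolution (hW : Integrable W) :
    Integrable (gaussianPDFReal 0 w ⋆ W) :=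
  (integrable_gaussianPDFReal 0 w).integrable_convolution _ hW

theorem integrable_gaussianMixture (hW : Integrable W) : Integrable (gaussianMixture v w W) :=
  ((integrable_gaussianPDFReal 0 v).const_mul _).add (integrable_gaussianPDFReal_convolution hW)

theorem integral_gaussianMixture (hv : v ≠ 0) (hw : w ≠ 0) (hW : Integrable W) :
    ∫ x, gaussianMixture v w W x = 1 := by
  unfold gaussianMixture
  rw [integral_add ((integrable_gaussianPDFReal 0 v).const_mul _)
    (integrable_gaussianPDFReal_convolution hW), integral_const_mul,
    integral_convolution _ (integrable_gaussianPDFReal 0 w) hW,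
    integral_gaussianPDFReal_eq_one 0 hv, integral_gaussianPDFReal_eq_one 0 hw]
  simp

theorem ft_gaussianMixture (hW : Integrable W) (ω : ℝ) :
    ft (gaussianMixture v w W) ω = (1 - ∫ x, W x : ℝ) * ft (gaussianPDFReal 0 v) ω +
      ft (gaussianPDFReal 0 w) ω * ft W ω := by
  unfold gaussianMixture
  rw [ft_add ((integrable_gaussianPDFReal 0 v).const_mul _)
    (integrable_gaussianPDFReal_convolution hW), ft_const_mul,
    ft_convolution (integrable_gaussianPDFReal 0 w) hW]

theorem integrable_ft_gaussianPDFReal (hv : v ≠ 0) : Integrable (ft (gaussianPDFReal 0 v)) := by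
  refine (integrable_exp_neg_mul_sq (by positivity : (0 : ℝ) < v / 2)).mono'
    (continuous_ft (integrable_gaussianPDFReal 0 v)).aestronglyMeasurable (.of_forall fun ω ↦ ?_)
  rw [norm_ft_gaussianPDFReal hv]
  exact (congrArg Real.exp (by ring)).le

theorem integrable_ft_gaussianMixture (hv : v ≠ 0) (hw : w ≠ 0) (hW : Integrable W) :
    Integrable (ft (gaussianMixture v w W)) := by
  simp only [funext (ft_gaussianMixture hW)]
  exact ((integrable_ft_gaussianPDFReal hv).const_mul _).add
    ((integrable_ft_gaussianPDFReal hw).mul_bdd (continuous_ft hW).aestronglyMeasurable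
      (.of_forall (norm_ft_le W)))

theorem memSobolevBall_gaussianMixture {s B : ℝ} (hs : 0 ≤ s)
    (hv : MemSobolevBall s (B / 2) (gaussianPDFReal 0 v)) (hw : w ≠ 0) (hw_one : w ≤ 1)
    (hW_nonneg : ∀ x, 0 ≤ W x) (hW_one : ∫ x, W x ≤ 1) (hW : Integrable W) (hW₂ : MemLp W 2)
    (hB : sobolevConst s * (w : ℝ) ^ (-s) * (2 * Real.pi * ∫ x, W x ^ 2) ≤ (B / 2) ^ 2) :
    MemSobolevBall s B (gaussianMixture v w W) := by
  have hmass : |1 - ∫ x, W x| ≤ 1 := by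
    rw [abs_of_nonneg (by linarith)]
    exact sub_le_self _ (integral_nonneg hW_nonneg)
  exact (hv.const_mul (integrable_gaussianPDFReal 0 v) hmass).add
    ((integrable_gaussianPDFReal 0 v).const_mul _) (integrable_gaussianPDFReal_convolution hW)
    (memSobolevBall_gaussianPDFReal_convolution hs hw hw_one hW hW₂ hB)

end GaussianMixture

/-- A smooth cutoff equal to `1` on `[5/4, 7/4]` and vanishing outside `(1, 2)`. -/
noncomputable def plateauBump : ContDiffBump (3 / 2 : ℝ) :=
  ⟨1 / 4, 1 / 2, by norm_num, by norm_num⟩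

/-- The cutoff `plateauBump` rescaled to the frequency band `[M, 2M]`. -/
noncomputable def bandCutoff (M x : ℝ) : ℝ := plateauBump (x / M)

/-- A bump of height `δ` on the frequency band `[M, 2M]`, carrying the phase `ρ`. -/
noncomputable def phaseBump (ρ : ℝ → ℝ) (δ M x : ℝ) : ℂ :=
  δ * bandCutoff M x * Complex.exp (ρ x * Complex.I)

section Bump

variable {ρ : ℝ → ℝ} {M δ ρbar C x : ℝ}

theorem contDiff_bandCutoff (M : ℝ) : ContDiff ℝ 1 (bandCutoff M) :=
  plateauBump.contDiff.comp (contDiff_id.div_const M)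

theorem bandCutoff_nonneg (M x : ℝ) : 0 ≤ bandCutoff M x := plateauBump.nonneg

theorem bandCutoff_le_one (M x : ℝ) : bandCutoff M x ≤ 1 := plateauBump.le_one

theorem bandCutoff_eq_one (hM : 0 < M) (hx : x ∈ Set.Icc (5 / 4 * M) (7 / 4 * M)) :
    bandCutoff M x = 1 := by
  have hlower : 5 / 4 ≤ x / M := (le_div_iff₀ hM).2 hx.1
  have hupper : x / M ≤ 7 / 4 := (div_le_iff₀ hM).2 hx.2
  refine plateauBump.one_of_mem_closedBall (Metric.mem_closedBall.2 ?_)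
  rw [Real.dist_eq, abs_le, plateauBump]
  constructor <;> linarith

theorem bandCutoff_eq_zero (hM : 0 < M) (hx : x ∉ Set.Ioo M (2 * M)) : bandCutoff M x = 0 := by
  refine plateauBump.zero_of_le_dist ?_
  rw [Real.dist_eq, plateauBump, le_abs]
  rcases le_or_gt x M with hle | hlt
  · have : x / M ≤ 1 := (div_le_one hM).2 hle
    right
    linarith
  · have : 2 ≤ x / M := (le_div_iff₀ hM).2 (not_lt.1 fun h ↦ hx ⟨hlt, h⟩)
    left
    linarith

theorem exists_abs_deriv_bandCutoff_le :
    ∃ C, 0 ≤ C ∧ ∀ M, 1 ≤ M → ∀ x, |deriv (bandCutoff M) x| ≤ C := by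
  have hbump : ContDiff ℝ 1 plateauBump := plateauBump.contDiff
  obtain ⟨C, hC⟩ := (hbump.continuous_deriv le_rfl).bounded_above_of_compact_support
    plateauBump.hasCompactSupport.deriv
  refine ⟨C, (norm_nonneg _).trans (hC 0), fun M hM x ↦ ?_⟩
  have hderiv : HasDerivAt (bandCutoff M) (deriv plateauBump (x / M) * (1 / M)) x :=
    ((hbump.differentiable one_ne_zero _).hasDerivAt (x := x / M)).comp x
      ((hasDerivAt_id x).div_const M)
  rw [hderiv.deriv, abs_mul, abs_of_nonneg (by positivity : 0 ≤ 1 / M)]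
  exact (mul_le_of_le_one_right (abs_nonneg _) ((div_le_one (by linarith)).2 hM)).trans (hC _)

theorem hasDerivAt_phaseBump (hρ : DifferentiableAt ℝ ρ x) :
    HasDerivAt (phaseBump ρ δ M) (δ * (deriv (bandCutoff M) x +
      bandCutoff M x * (deriv ρ x * Complex.I)) * Complex.exp (ρ x * Complex.I)) x := by
  have hcutoff := (((contDiff_bandCutoff M).differentiable one_ne_zero x).hasDerivAt).ofReal_comp
  have hphase := (hρ.hasDerivAt.ofReal_comp.mul_const Complex.I).cexp
  exact ((hcutoff.const_mul (δ : ℂ)).mul hphase).congr_deriv (by ring)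

theorem phaseBump_eventuallyEq_zero (hM : 0 < M) (hx : x < M) :
    phaseBump ρ δ M =ᶠ[nhds x] fun _ ↦ 0 := by
  filter_upwards [Iio_mem_nhds hx] with y hy
  rw [phaseBump, bandCutoff_eq_zero hM fun h ↦ lt_asymm hy h.1, Complex.ofReal_zero, mul_zero,
    zero_mul]

theorem differentiable_phaseBump (hM : 0 < M) (hρ : ∀ ω, M ≤ ω → DifferentiableAt ℝ ρ ω) :
    Differentiable ℝ (phaseBump ρ δ M) := fun x ↦ by
  rcases lt_or_ge x M with hx | hx
  · exact (differentiableAt_const 0).congr_of_eventuallyEq (phaseBump_eventuallyEq_zero hM hx)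
  · exact (hasDerivAt_phaseBump (hρ x hx)).differentiableAt

theorem support_phaseBump_subset (hM : 0 < M) :
    Function.support (phaseBump ρ δ M) ⊆ Set.Icc M (2 * M) := fun x hx ↦ by
  by_contra hmem
  exact hx (by rw [phaseBump, bandCutoff_eq_zero hM fun h ↦ hmem ⟨h.1.le, h.2.le⟩,
    Complex.ofReal_zero, mul_zero, zero_mul])

theorem norm_phaseBump_le (hδ : 0 ≤ δ) (x : ℝ) : ‖phaseBump ρ δ M x‖ ≤ δ := by
  rw [phaseBump, norm_mul, norm_mul, Complex.norm_exp_ofReal_mul_I, Complex.norm_of_nonneg hδ,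
    Complex.norm_of_nonneg (bandCutoff_nonneg M x), mul_one]
  exact mul_le_of_le_one_right hδ (bandCutoff_le_one M x)

theorem norm_deriv_phaseBump_le (hM : 0 < M) (hδ : 0 ≤ δ) (hC : ∀ x, |deriv (bandCutoff M) x| ≤ C)
    (hρ : ∀ ω, M ≤ ω → DifferentiableAt ℝ ρ ω) (hρ' : ∀ ω, M ≤ ω → |deriv ρ ω| ≤ ρbar) (x : ℝ) :
    ‖deriv (phaseBump ρ δ M) x‖ ≤ δ * (C + ρbar) := by
  rcases lt_or_ge x M with hx | hx
  · rw [(phaseBump_eventuallyEq_zero hM hx).deriv_eq, deriv_const, norm_zero]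
    exact mul_nonneg hδ (add_nonneg ((abs_nonneg _).trans (hC x))
      ((abs_nonneg _).trans (hρ' M le_rfl)))
  · rw [(hasDerivAt_phaseBump (hρ x hx)).deriv, norm_mul, norm_mul, Complex.norm_exp_ofReal_mul_I,
      Complex.norm_of_nonneg hδ, mul_one]
    gcongr
    calc ‖((deriv (bandCutoff M) x : ℝ) : ℂ) + bandCutoff M x * (deriv ρ x * Complex.I)‖
        ≤ |deriv (bandCutoff M) x| + bandCutoff M x * |deriv ρ x| := by
          refine (norm_add_le _ _).trans (le_of_eq ?_)
          rw [norm_mul, norm_mul, Complex.norm_I, mul_one,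
            Complex.norm_of_nonneg (bandCutoff_nonneg M x)]
          simp only [Complex.norm_real, Real.norm_eq_abs]
      _ ≤ C + ρbar := add_le_add (hC x)
          ((mul_le_of_le_one_left (abs_nonneg _) (bandCutoff_le_one M x)).trans (hρ' x hx))

theorem phaseBump_mul_conj {z : ℂ} (hM : 0 < M)
    (hz : M ≤ x → ‖z‖ * Complex.exp (ρ x * Complex.I) = z) :
    phaseBump ρ δ M x * (starRingEnd ℂ) z = (δ * bandCutoff M x * ‖z‖ : ℝ) := by
  rcases lt_or_ge x M with hx | hx
  · rw [phaseBump, bandCutoff_eq_zero hM fun h ↦ lt_asymm hx h.1]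
    simp
  · have hunit : Complex.exp (ρ x * Complex.I) * (starRingEnd ℂ) (Complex.exp (ρ x * Complex.I))
        = 1 := by
      rw [Complex.mul_conj', Complex.norm_exp_ofReal_mul_I]
      norm_num
    conv_lhs => rw [← hz hx]
    rw [phaseBump, map_mul, Complex.conj_ofReal]
    push_cast
    linear_combination (δ * bandCutoff M x * ‖z‖ : ℂ) * hunit

end Bump

/-- The density of an observation: the error density `g` mixed, with weight `μ`, with the density
of an error plus an independent draw from `f`. -/
noncomputable def sparseMixture (g : ℝ → ℝ) (μ : ℝ) (f : ℝ → ℝ) (y : ℝ) : ℝ :=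
  (1 - μ) * g y + μ * ∫ θ, g (y - θ) * f θ

section SparseMixture

variable {g f f' : ℝ → ℝ} {μ : ℝ}

theorem sparseMixture_eq_convolution (g : ℝ → ℝ) (μ : ℝ) (f : ℝ → ℝ) (y : ℝ) :
    sparseMixture g μ f y = (1 - μ) * g y + μ * (g ⋆ f) y := by
  rw [sparseMixture, convolution_lsmul_swap]
  simp only [smul_eq_mul]

theorem sparseMixture_nonneg (hg : ∀ x, 0 ≤ g x) (hf : ∀ x, 0 ≤ f x) (hμ : μ ∈ Set.Icc 0 1)
    (y : ℝ) : 0 ≤ sparseMixture g μ f y :=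
  add_nonneg (mul_nonneg (sub_nonneg.2 hμ.2) (hg y))
    (mul_nonneg hμ.1 (integral_nonneg fun _ ↦ mul_nonneg (hg _) (hf _)))

theorem integrable_sparseMixture (hg : Integrable g) (hf : Integrable f) :
    Integrable (sparseMixture g μ f) := by
  simp only [funext (sparseMixture_eq_convolution g μ f)]
  exact (hg.const_mul _).add ((hg.integrable_convolution _ hf).const_mul _)

theorem integral_sparseMixture (hg : Integrable g) (hg_one : ∫ x, g x = 1) (hf : Integrable f)
    (hf_one : ∫ x, f x = 1) : ∫ y, sparseMixture g μ f y = 1 := by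
  simp only [sparseMixture_eq_convolution]
  rw [integral_add (hg.const_mul _) ((hg.integrable_convolution _ hf).const_mul _),
    integral_const_mul, integral_const_mul, integral_convolution _ hg hf, hg_one, hf_one]
  simp

theorem sparseMixture_sub_ae (hg : Integrable g) (hf : Integrable f) (hf' : Integrable f') :
    ∀ᵐ y, sparseMixture g μ f y - sparseMixture g μ f' y = μ * (g ⋆ (f - f')) y := by
  filter_upwards [hg.ae_convolution_exists (ContinuousLinearMap.lsmul ℝ ℝ) hf,
    hg.ae_convolution_exists (ContinuousLinearMap.lsmul ℝ ℝ) hf'] with y hy hy'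
  have hsub : (g ⋆ (f - f')) y = (g ⋆ f) y - (g ⋆ f') y := by
    simp only [convolution_def, Pi.sub_apply, map_sub]
    exact integral_sub hy hy'
  rw [sparseMixture_eq_convolution, sparseMixture_eq_convolution, hsub]
  ring

theorem integral_abs_sparseMixture_sub (hg : Integrable g) (hf : Integrable f)
    (hf' : Integrable f') :
    ∫ y, |sparseMixture g μ f y - sparseMixture g μ f' y| = |μ| * ∫ y, |(g ⋆ (f - f')) y| := by
  rw [← integral_const_mul]
  refine integral_congr_ae ?_
  filter_upwards [sparseMixture_sub_ae hg hf hf'] with y hy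
  rw [hy, abs_mul]

end SparseMixture

/-- The Gaussian mixture built from `|k| + σ k`, where `k = realInvFt u`. The two densities that
the lower bound compares are the cases `σ = 1` and `σ = -1`; adding `|k|` keeps both of them
nonnegative. -/
noncomputable def perturbedMixture (v w : ℝ≥0) (u : ℝ → ℂ) (σ : ℝ) : ℝ → ℝ :=
  gaussianMixture v w fun x ↦ |realInvFt u x| + σ * realInvFt u x

section PerturbedMixture

variable {v w : ℝ≥0} {u : ℝ → ℂ} {σ : ℝ}

theorem abs_add_mul_nonneg (hσ : |σ| ≤ 1) (x : ℝ) : 0 ≤ |x| + σ * x := by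
  have h : |σ * x| ≤ |x| := by
    rw [abs_mul]
    exact mul_le_of_le_one_left (abs_nonneg x) hσ
  linarith [(abs_le.1 h).1]

theorem integrable_abs_add_mul_realInvFt (hu' : Integrable (𝓕 u)) (σ : ℝ) :
    Integrable fun x ↦ |realInvFt u x| + σ * realInvFt u x :=
  (integrable_realInvFt hu').abs.add ((integrable_realInvFt hu').const_mul σ)

theorem integral_abs_add_mul_realInvFt (hc : Continuous u) (hu : Integrable u)
    (hu' : Integrable (𝓕 u)) (h0 : u 0 = 0) (σ : ℝ) :
    ∫ x, (|realInvFt u x| + σ * realInvFt u x) = ∫ x, |realInvFt u x| := by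
  rw [integral_add (integrable_realInvFt hu').abs ((integrable_realInvFt hu').const_mul σ),
    integral_const_mul, integral_realInvFt hc hu hu' h0, mul_zero, add_zero]

theorem memLp_abs_add_mul_realInvFt (hu : Integrable u) (hu₂ : MemLp u 2) (σ : ℝ) :
    MemLp (fun x ↦ |realInvFt u x| + σ * realInvFt u x) 2 :=
  (memLp_realInvFt hu hu₂).abs.add ((memLp_realInvFt hu hu₂).const_mul σ)

theorem integral_abs_add_mul_realInvFt_sq_le (hu : Integrable u) (hu₂ : MemLp u 2)
    (hσ : |σ| ≤ 1) :
    ∫ x, (|realInvFt u x| + σ * realInvFt u x) ^ 2 ≤ 8 / Real.pi * ∫ x, ‖u x‖ ^ 2 := by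
  have hk := (memLp_realInvFt hu hu₂).integrable_sq
  calc ∫ x, (|realInvFt u x| + σ * realInvFt u x) ^ 2 ≤ ∫ x, 4 * realInvFt u x ^ 2 := by
        refine integral_mono (memLp_abs_add_mul_realInvFt hu hu₂ σ).integrable_sq
          (hk.const_mul 4) fun x ↦ ?_
        have hupper : σ * realInvFt u x ≤ |realInvFt u x| := by
          refine (le_abs_self _).trans ?_
          rw [abs_mul]
          exact mul_le_of_le_one_left (abs_nonneg _) hσ
        have hlower := abs_add_mul_nonneg hσ (realInvFt u x)
        nlinarith [sq_abs (realInvFt u x)]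
    _ = 4 * ∫ x, realInvFt u x ^ 2 := integral_const_mul _ _
    _ ≤ 4 * (2 / Real.pi * ∫ x, ‖u x‖ ^ 2) := by
        gcongr
        exact integral_realInvFt_sq_le hu hu₂
    _ = 8 / Real.pi * ∫ x, ‖u x‖ ^ 2 := by ring

theorem integrable_perturbedMixture (hu' : Integrable (𝓕 u)) (σ : ℝ) :
    Integrable (perturbedMixture v w u σ) :=
  integrable_gaussianMixture (integrable_abs_add_mul_realInvFt hu' σ)

theorem ft_perturbedMixture_sub (hc : Continuous u) (hu : Integrable u) (hu' : Integrable (𝓕 u))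
    (h0 : u 0 = 0) (ω : ℝ) :
    ft (perturbedMixture v w u 1) ω - ft (perturbedMixture v w u (-1)) ω =
      2 * ft (gaussianPDFReal 0 w) ω * (u ω + (starRingEnd ℂ) (u (-ω))) := by
  have hk := integrable_realInvFt hu'
  have hft (σ : ℝ) : ft (fun x ↦ |realInvFt u x| + σ * realInvFt u x) ω =
      ft (fun x ↦ |realInvFt u x|) ω + σ * ft (realInvFt u) ω := by
    rw [ft_add hk.abs (hk.const_mul σ), ft_const_mul]
  rw [perturbedMixture, perturbedMixture,
    ft_gaussianMixture (integrable_abs_add_mul_realInvFt hu' _),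
    ft_gaussianMixture (integrable_abs_add_mul_realInvFt hu' _),
    integral_abs_add_mul_realInvFt hc hu hu' h0, integral_abs_add_mul_realInvFt hc hu hu' h0,
    hft, hft, ft_realInvFt hc hu hu']
  push_cast
  ring

theorem convolutionExists_gaussianPDFReal {W : ℝ → ℝ} (hW : Integrable W) :
    ConvolutionExists (gaussianPDFReal 0 w) W (ContinuousLinearMap.lsmul ℝ ℝ) := by
  refine fun x ↦ (hW.comp_sub_left x).bdd_mul (c := (√(2 * Real.pi * w))⁻¹)
    (ProbabilityTheory.measurable_gaussianPDFReal 0 w).aestronglyMeasurable (.of_forall fun t ↦ ?_)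
  rw [Real.norm_of_nonneg (ProbabilityTheory.gaussianPDFReal_nonneg _ _ _), gaussianPDFReal]
  refine mul_le_of_le_one_right (by positivity) (Real.exp_le_one_iff.2 ?_)
  rw [neg_div]
  exact neg_nonpos.2 (by positivity)

theorem perturbedMixture_sub (hc : Continuous u) (hu : Integrable u) (hu' : Integrable (𝓕 u))
    (h0 : u 0 = 0) :
    perturbedMixture v w u 1 - perturbedMixture v w u (-1) =
      (2 : ℝ) • realInvFt fun ω ↦ u ω * ft (gaussianPDFReal 0 w) ω := by
  have hΨ := ProbabilityTheory.integrable_gaussianPDFReal 0 w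
  have hk := integrable_realInvFt hu'
  have hconv (σ : ℝ) (x : ℝ) :
      (gaussianPDFReal 0 w ⋆ fun x ↦ |realInvFt u x| + σ * realInvFt u x) x =
        (gaussianPDFReal 0 w ⋆ fun x ↦ |realInvFt u x|) x +
          σ * (gaussianPDFReal 0 w ⋆ realInvFt u) x := by
    have hsmul : (fun x ↦ |realInvFt u x| + σ * realInvFt u x) =
        (fun x ↦ |realInvFt u x|) + σ • realInvFt u := rfl
    rw [hsmul, (convolutionExists_gaussianPDFReal hk.abs x).distrib_add
      (convolutionExists_gaussianPDFReal (hk.smul σ) x), convolution_smul]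
    rfl
  ext x
  rw [Pi.sub_apply, Pi.smul_apply, smul_eq_mul, ← convolution_realInvFt hΨ hu]
  simp only [perturbedMixture, gaussianMixture]
  rw [hconv, hconv, integral_abs_add_mul_realInvFt hc hu hu' h0,
    integral_abs_add_mul_realInvFt hc hu hu' h0]
  ring

theorem integral_abs_sparseMixture_perturbedMixture_sub_le {g : ℝ → ℝ} {μ : ℝ}
    (hμ : μ ∈ Set.Icc 0 1) (hg : Integrable g) (hc : Continuous u) (hu : Integrable u)
    (hu' : Integrable (𝓕 u)) (h0 : u 0 = 0)
    (hF : Integrable (𝓕 fun ω ↦ u ω * (ft (gaussianPDFReal 0 w) ω * ft g ω))) :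
    ∫ y, |sparseMixture g μ (perturbedMixture v w u 1) y -
        sparseMixture g μ (perturbedMixture v w u (-1)) y| ≤
      4 * ∫ x, ‖𝓕 (fun ω ↦ u ω * (ft (gaussianPDFReal 0 w) ω * ft g ω)) x‖ := by
  have hΨ := ProbabilityTheory.integrable_gaussianPDFReal 0 w
  have huΨ : Integrable fun ω ↦ u ω * ft (gaussianPDFReal 0 w) ω :=
    hu.mul_bdd (continuous_ft hΨ).aestronglyMeasurable (.of_forall (norm_ft_le _))
  have habs (y : ℝ) : |(g ⋆ (perturbedMixture v w u 1 - perturbedMixture v w u (-1))) y| =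
      2 * |realInvFt (fun ω ↦ u ω * (ft (gaussianPDFReal 0 w) ω * ft g ω)) y| := by
    rw [perturbedMixture_sub hc hu hu' h0, convolution_smul, convolution_realInvFt hg huΨ,
      Pi.smul_apply, smul_eq_mul, abs_mul, abs_two]
    simp only [mul_assoc]
  rw [integral_abs_sparseMixture_sub hg (integrable_perturbedMixture hu' 1)
    (integrable_perturbedMixture hu' (-1)), abs_of_nonneg hμ.1]
  simp only [habs]
  rw [integral_const_mul]
  refine (mul_le_of_le_one_left (by positivity) hμ.2).trans ?_
  linarith [integral_abs_realInvFt_le hF]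

end PerturbedMixture

section Band

variable {g ρ : ℝ → ℝ} {A γ β Cg τ M δ C ρbar : ℝ} {w : ℝ≥0}

theorem hasDerivAt_ft_gaussianPDFReal (hw : w ≠ 0) (ω : ℝ) :
    HasDerivAt (ft (gaussianPDFReal 0 w)) (-(w * ω) * ft (gaussianPDFReal 0 w) ω) ω := by
  have hexponent : HasDerivAt (fun ω : ℝ ↦ -(w * ω ^ 2 / 2)) (-(w * ω)) ω :=
    (((hasDerivAt_pow 2 ω).const_mul (w : ℝ)).div_const 2).neg.congr_deriv (by push_cast; ring)
  rw [funext (ft_gaussianPDFReal hw)]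
  exact hexponent.exp.ofReal_comp.congr_deriv (by push_cast; ring)

theorem norm_ft_gaussianPDFReal_le_one (hw : w ≠ 0) (ω : ℝ) :
    ‖ft (gaussianPDFReal 0 w) ω‖ ≤ 1 := by
  rw [norm_ft_gaussianPDFReal hw]
  exact Real.exp_le_one_iff.2 (neg_nonpos.2 (by positivity))

theorem norm_deriv_ft_gaussianPDFReal_le (hw : w ≠ 0) (hM : 1 ≤ M) (hwM : w * M ^ 2 ≤ 1) {ω : ℝ}
    (hω : ω ∈ Set.Icc M (2 * M)) : ‖deriv (ft (gaussianPDFReal 0 w)) ω‖ ≤ 2 := by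
  have hslope : w * ω ≤ 2 := by
    nlinarith [mul_le_mul_of_nonneg_left hω.2 w.coe_nonneg, w.coe_nonneg]
  have hω0 : 0 ≤ ω := by linarith [hω.1]
  rw [(hasDerivAt_ft_gaussianPDFReal hw ω).deriv, norm_mul, norm_neg, ← Complex.ofReal_mul,
    Complex.norm_of_nonneg (by positivity)]
  exact (mul_le_of_le_one_right (by positivity) (norm_ft_gaussianPDFReal_le_one hw ω)).trans hslope

theorem norm_ft_le_of_le (hA : 0 ≤ A) (hγ : 0 ≤ γ) (hβ : 0 ≤ β) (hM : 0 ≤ M)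
    (hg : ∀ ω, ‖ft g ω‖ ≤ A * Real.exp (-γ * |ω| ^ β)) {ω : ℝ} (hω : M ≤ ω) :
    ‖ft g ω‖ ≤ A * Real.exp (-γ * M ^ β) := by
  refine (hg ω).trans ?_
  rw [neg_mul, neg_mul]
  gcongr
  exact hω.trans (le_abs_self ω)

theorem norm_deriv_ft_le (hA : 0 ≤ A) (hγ : 0 ≤ γ) (hβ : 0 ≤ β) (hτ : 0 ≤ τ) (hM : 0 ≤ M)
    (hg : ∀ ω, ‖ft g ω‖ ≤ A * Real.exp (-γ * |ω| ^ β))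
    (hg' : ∀ ω, ‖deriv (ft g) ω‖ ≤ Cg * ‖ft g ω‖ * (1 + |ω|) ^ τ) {ω : ℝ}
    (hω : ω ∈ Set.Icc M (2 * M)) :
    ‖deriv (ft g) ω‖ ≤ |Cg| * (A * Real.exp (-γ * M ^ β)) * (1 + 2 * M) ^ τ := by
  refine (hg' ω).trans ?_
  gcongr
  · exact le_abs_self Cg
  · exact norm_ft_le_of_le hA hγ hβ hM hg hω.1
  · rw [abs_of_nonneg (hM.trans hω.1)]
    exact hω.2

theorem integral_norm_fourier_phaseBump_mul_le (hA : 0 < A) (hγ : 0 ≤ γ) (hβ : 0 ≤ β)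
    (hτ : 0 ≤ τ) (hg : ∀ ω, ‖ft g ω‖ ≤ A * Real.exp (-γ * |ω| ^ β))
    (hg_diff : Differentiable ℝ (ft g))
    (hg' : ∀ ω, ‖deriv (ft g) ω‖ ≤ Cg * ‖ft g ω‖ * (1 + |ω|) ^ τ)
    (hw : w ≠ 0) (hM : 1 ≤ M) (hwM : w * M ^ 2 ≤ 1) (hδ : 0 < δ)
    (hC : ∀ x, |deriv (bandCutoff M) x| ≤ C)
    (hρ : ∀ ω, M ≤ ω → DifferentiableAt ℝ ρ ω) (hρ' : ∀ ω, M ≤ ω → |deriv ρ ω| ≤ ρbar) :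
    Integrable (𝓕 fun ω ↦ phaseBump ρ δ M ω * (ft (gaussianPDFReal 0 w) ω * ft g ω)) ∧
      ∫ x, ‖𝓕 (fun ω ↦ phaseBump ρ δ M ω * (ft (gaussianPDFReal 0 w) ω * ft g ω)) x‖ ≤
        √M * (δ * (A * Real.exp (-γ * M ^ β)) *
          (3 + (C + ρbar) + |Cg| * (1 + 2 * M) ^ τ)) := by
  have hM0 : 0 < M := by linarith
  set E := A * Real.exp (-γ * M ^ β)
  have hΨ_diff : Differentiable ℝ (ft (gaussianPDFReal 0 w)) := fun ω ↦
    (hasDerivAt_ft_gaussianPDFReal hw ω).differentiableAt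
  have hE_pos : 0 < E := by positivity
  have hmul (ω : ℝ) (hω : ω ∈ Set.Icc M (2 * M)) :
      ‖ft (gaussianPDFReal 0 w) ω * ft g ω‖ ≤ E := by
    rw [norm_mul, ← one_mul E]
    gcongr
    · exact norm_ft_gaussianPDFReal_le_one hw ω
    · exact norm_ft_le_of_le hA.le hγ hβ hM0.le hg hω.1
  have hderiv (ω : ℝ) (hω : ω ∈ Set.Icc M (2 * M)) :
      ‖deriv (fun ω ↦ ft (gaussianPDFReal 0 w) ω * ft g ω) ω‖ ≤
        2 * E + 1 * (|Cg| * E * (1 + 2 * M) ^ τ) := by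
    rw [deriv_fun_mul (hΨ_diff ω) (hg_diff ω)]
    refine (norm_add_le _ _).trans ?_
    rw [norm_mul, norm_mul]
    gcongr
    · exact norm_deriv_ft_gaussianPDFReal_le hw hM hwM hω
    · exact norm_ft_le_of_le hA.le hγ hβ hM0.le hg hω.1
    · exact norm_ft_gaussianPDFReal_le_one hw ω
    · exact norm_deriv_ft_le hA.le hγ hβ hτ hM0.le hg hg' hω
  obtain ⟨hint, hle⟩ := integral_norm_fourier_mul_le (differentiable_phaseBump hM0 hρ)
    (hΨ_diff.mul hg_diff) (by linarith) (support_phaseBump_subset hM0) hδ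
    (norm_phaseBump_le hδ.le) (norm_deriv_phaseBump_le hM0 hδ.le hC hρ hρ') hE_pos hmul hderiv
  refine ⟨hint, hle.trans (le_of_eq ?_)⟩
  rw [show 2 * M - M = M by ring]
  ring

end Band

/-- The target functional `∫ φ f`, written in the frequency domain as in Parseval's formula. -/
noncomputable def linFunctional (φ f : ℝ → ℝ) : ℂ :=
  (1 / (2 * Real.pi) : ℂ) * ∫ ω : ℝ, ft f ω * ft φ (-ω)

/-- The contribution of frequency `ω` to the separation of the functional: by phase alignment it is
nonnegative, so that no cancellation occurs. -/
noncomputable def alignedSpectrum (φ : ℝ → ℝ) (w : ℝ≥0) (δ M ω : ℝ) : ℝ :=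
  ‖ft (gaussianPDFReal 0 w) ω‖ * (δ * bandCutoff M ω * ‖ft φ ω‖)

/-- The constant in the lower bound for the separation of the functional. -/
noncomputable def separationConst (Cφ a : ℝ) : ℝ :=
  1 / Real.pi * (Real.exp (-2) * (Cφ * min 1 (5 ^ (-(a / 2)))))

section Separation

variable {φ f f' ρ : ℝ → ℝ} {w v : ℝ≥0} {δ M Cφ a : ℝ} {u : ℝ → ℂ}

theorem separationConst_pos (hCφ : 0 < Cφ) (a : ℝ) : 0 < separationConst Cφ a := by
  have : (0 : ℝ) < min 1 (5 ^ (-(a / 2))) := by positivity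
  unfold separationConst
  positivity

theorem linFunctional_sub (hφ : Integrable φ) (hf : Integrable (ft f)) (hf' : Integrable (ft f')) :
    linFunctional φ f - linFunctional φ f' =
      (1 / (2 * Real.pi) : ℂ) * ∫ ω, (ft f ω - ft f' ω) * ft φ (-ω) := by
  have hmul {t : ℝ → ℂ} (ht : Integrable t) : Integrable fun ω ↦ t ω * ft φ (-ω) :=
    ht.mul_bdd (by
      have := continuous_ft hφ
      fun_prop : Continuous fun ω ↦ ft φ (-ω)).aestronglyMeasurable
      (.of_forall fun ω ↦ norm_ft_le φ (-ω))
  simp only [linFunctional, sub_mul]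
  rw [← mul_sub, integral_sub (hmul hf) (hmul hf')]

theorem alignedSpectrum_nonneg (hδ : 0 ≤ δ) (ω : ℝ) : 0 ≤ alignedSpectrum φ w δ M ω :=
  mul_nonneg (norm_nonneg _)
    (mul_nonneg (mul_nonneg hδ (bandCutoff_nonneg M ω)) (norm_nonneg _))

theorem integrable_alignedSpectrum (hφ : Integrable φ) (hw : w ≠ 0) (hδ : 0 ≤ δ) :
    Integrable (alignedSpectrum φ w δ M) := by
  have hφc := continuous_ft hφ
  have hcutoff := (contDiff_bandCutoff M).continuous
  refine (integrable_ft_gaussianPDFReal hw).norm.mul_bdd (c := δ * 1 * ∫ x, |φ x|)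
    (by fun_prop : Continuous _).aestronglyMeasurable (.of_forall fun ω ↦ ?_)
  rw [Real.norm_of_nonneg (mul_nonneg (mul_nonneg hδ (bandCutoff_nonneg M ω)) (norm_nonneg _))]
  gcongr
  · exact bandCutoff_le_one M ω
  · exact norm_ft_le φ ω

theorem ft_gaussianPDFReal_mul_phaseBump_mul_ft_neg (hw : w ≠ 0) (hM : 0 < M)
    (hphase : ∀ ω, M ≤ ω → ‖ft φ ω‖ * Complex.exp (ρ ω * Complex.I) = ft φ ω) (ω : ℝ) :
    2 * ft (gaussianPDFReal 0 w) ω *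
        (phaseBump ρ δ M ω + (starRingEnd ℂ) (phaseBump ρ δ M (-ω))) * ft φ (-ω) =
      (2 * (alignedSpectrum φ w δ M ω + alignedSpectrum φ w δ M (-ω)) : ℝ) := by
  have hpos := phaseBump_mul_conj (δ := δ) hM (hphase ω)
  have hneg := congrArg (starRingEnd ℂ) (phaseBump_mul_conj (δ := δ) hM (hphase (-ω)))
  rw [map_mul, Complex.conj_conj, Complex.conj_ofReal] at hneg
  rw [← ft_neg] at hpos
  have hgauss : ft (gaussianPDFReal 0 w) ω = ‖ft (gaussianPDFReal 0 w) ω‖ := by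
    rw [norm_ft_gaussianPDFReal hw, ft_gaussianPDFReal hw]
  have hgauss_neg : ‖ft (gaussianPDFReal 0 w) (-ω)‖ = ‖ft (gaussianPDFReal 0 w) ω‖ := by
    rw [ft_neg, RCLike.norm_conj]
  rw [hgauss, alignedSpectrum, alignedSpectrum, hgauss_neg]
  push_cast at hpos hneg ⊢
  linear_combination 2 * (‖ft (gaussianPDFReal 0 w) ω‖ : ℂ) * (hpos + hneg)

theorem linFunctional_perturbedMixture_sub (hφ : Integrable φ) (hv : v ≠ 0) (hw : w ≠ 0)
    (hM : 0 < M) (hδ : 0 ≤ δ) (hc : Continuous (phaseBump ρ δ M))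
    (hu : Integrable (phaseBump ρ δ M)) (hu' : Integrable (𝓕 (phaseBump ρ δ M)))
    (hphase : ∀ ω, M ≤ ω → ‖ft φ ω‖ * Complex.exp (ρ ω * Complex.I) = ft φ ω) :
    linFunctional φ (perturbedMixture v w (phaseBump ρ δ M) 1) -
        linFunctional φ (perturbedMixture v w (phaseBump ρ δ M) (-1)) =
      (2 / Real.pi * ∫ ω, alignedSpectrum φ w δ M ω : ℝ) := by
  have hr := integrable_alignedSpectrum (M := M) hφ hw hδ
  have hft (σ : ℝ) : Integrable (ft (perturbedMixture v w (phaseBump ρ δ M) σ)) :=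
    integrable_ft_gaussianMixture hv hw (integrable_abs_add_mul_realInvFt hu' σ)
  have h0 : phaseBump ρ δ M 0 = 0 := (phaseBump_eventuallyEq_zero hM hM).eq_of_nhds
  rw [linFunctional_sub hφ (hft 1) (hft (-1))]
  simp only [ft_perturbedMixture_sub hc hu hu' h0,
    ft_gaussianPDFReal_mul_phaseBump_mul_ft_neg hw hM hphase]
  rw [integral_complex_ofReal, integral_const_mul, integral_add hr hr.comp_neg,
    integral_neg_eq_self (alignedSpectrum φ w δ M) volume]
  push_cast
  field_simp
  ring

theorem min_mul_rpow_neg_le_sq_add_one_rpow (hM : 1 ≤ M) {ω : ℝ} (hω : ω ∈ Set.Icc M (2 * M)) :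
    min 1 (5 ^ (-(a / 2))) * M ^ (-a) ≤ (ω ^ 2 + 1) ^ (-(a / 2)) := by
  have hM0 : 0 < M := by linarith
  have hpow : (M ^ 2) ^ (-(a / 2)) = M ^ (-a) := by
    rw [← Real.rpow_natCast, ← Real.rpow_mul hM0.le]
    congr 1
    push_cast
    ring
  rcases le_total 0 a with ha | ha
  · calc min 1 (5 ^ (-(a / 2))) * M ^ (-a) ≤ 5 ^ (-(a / 2)) * M ^ (-a) := by
          gcongr
          exact min_le_right _ _
      _ = (5 * M ^ 2) ^ (-(a / 2)) := by
          rw [Real.mul_rpow (by positivity) (by positivity), hpow]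
      _ ≤ (ω ^ 2 + 1) ^ (-(a / 2)) :=
          Real.rpow_le_rpow_of_nonpos (by positivity) (by nlinarith [hω.1, hω.2]) (by linarith)
  · calc min 1 (5 ^ (-(a / 2))) * M ^ (-a) ≤ 1 * M ^ (-a) := by
          gcongr
          exact min_le_left _ _
      _ = (M ^ 2) ^ (-(a / 2)) := by rw [one_mul, hpow]
      _ ≤ (ω ^ 2 + 1) ^ (-(a / 2)) :=
          Real.rpow_le_rpow (by positivity) (by nlinarith [hω.1]) (by linarith)

theorem le_alignedSpectrum (hCφ : 0 ≤ Cφ)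
    (hφ : ∀ ω, Cφ * (ω ^ 2 + 1) ^ (-(a / 2)) ≤ ‖ft φ ω‖) (hw : w ≠ 0) (hM : 1 ≤ M)
    (hwM : w * M ^ 2 ≤ 1) (hδ : 0 ≤ δ) {ω : ℝ} (hω : ω ∈ Set.Icc (5 / 4 * M) (7 / 4 * M)) :
    Real.exp (-2) * (δ * (Cφ * min 1 (5 ^ (-(a / 2))) * M ^ (-a))) ≤
      alignedSpectrum φ w δ M ω := by
  have hband : ω ∈ Set.Icc M (2 * M) := ⟨by linarith [hω.1], by linarith [hω.2]⟩
  have hexp : Real.exp (-2) ≤ ‖ft (gaussianPDFReal 0 w) ω‖ := by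
    rw [norm_ft_gaussianPDFReal hw, Real.exp_le_exp]
    nlinarith [hband.1, hband.2, mul_le_mul_of_nonneg_left
      (pow_le_pow_left₀ (by linarith [hband.1]) hband.2 2) w.coe_nonneg]
  have hφ_low : Cφ * min 1 (5 ^ (-(a / 2))) * M ^ (-a) ≤ ‖ft φ ω‖ := by
    rw [mul_assoc]
    exact (mul_le_mul_of_nonneg_left (min_mul_rpow_neg_le_sq_add_one_rpow hM hband) hCφ).trans
      (hφ ω)
  rw [alignedSpectrum, bandCutoff_eq_one (by linarith) hω, mul_one]
  gcongr

theorem separationConst_mul_le (hφ_int : Integrable φ) (hCφ : 0 ≤ Cφ)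
    (hφ : ∀ ω, Cφ * (ω ^ 2 + 1) ^ (-(a / 2)) ≤ ‖ft φ ω‖) (hw : w ≠ 0) (hM : 1 ≤ M)
    (hwM : w * M ^ 2 ≤ 1) (hδ : 0 ≤ δ) :
    separationConst Cφ a * (δ * M ^ (1 - a)) ≤
      2 / Real.pi * ∫ ω, alignedSpectrum φ w δ M ω := by
  have hM0 : 0 < M := by linarith
  have hr := integrable_alignedSpectrum (M := M) hφ_int hw hδ
  calc separationConst Cφ a * (δ * M ^ (1 - a))
      = 2 / Real.pi * ∫ _ in Set.Icc (5 / 4 * M) (7 / 4 * M),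
          Real.exp (-2) * (δ * (Cφ * min 1 (5 ^ (-(a / 2))) * M ^ (-a))) := by
        rw [setIntegral_const, Real.volume_real_Icc_of_le (by linarith), smul_eq_mul,
          separationConst, sub_eq_neg_add, Real.rpow_add hM0, Real.rpow_one]
        ring
    _ ≤ 2 / Real.pi * ∫ ω in Set.Icc (5 / 4 * M) (7 / 4 * M), alignedSpectrum φ w δ M ω := by
        refine mul_le_mul_of_nonneg_left ?_ (by positivity)
        exact setIntegral_mono_on (integrableOn_const (by simp)) hr.integrableOn measurableSet_Icc
          fun ω ↦ le_alignedSpectrum hCφ hφ hw hM hwM hδ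
    _ ≤ 2 / Real.pi * ∫ ω, alignedSpectrum φ w δ M ω := by
        refine mul_le_mul_of_nonneg_left ?_ (by positivity)
        exact setIntegral_le_integral hr (.of_forall (alignedSpectrum_nonneg hδ))

end Separation

/-- A prior density over which the minimax risk is taken: a probability density in `Ω_s(B)` whose
spectrum is integrable against that of `φ`. -/
structure AdmissiblePrior (s B : ℝ) (φ f : ℝ → ℝ) : Prop where
  nonneg : ∀ x, 0 ≤ f x
  integrable : Integrable f
  integral_eq_one : ∫ x, f x = 1
  memSobolevBall : MemSobolevBall s B f
  integrable_spectrum_mul : Integrable fun ω ↦ ‖ft f ω‖ * ‖ft φ ω‖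

/-- A probability density `g` whose characteristic function decays like `exp (-γ |ω| ^ β)`, with
a logarithmic derivative of at most polynomial growth. -/
structure IsSupersmooth (g : ℝ → ℝ) (A γ β Cg τ : ℝ) : Prop where
  nonneg : ∀ x, 0 ≤ g x
  integrable : Integrable g
  integral_eq_one : ∫ x, g x = 1
  norm_ft_le : ∀ ω, ‖ft g ω‖ ≤ A * Real.exp (-γ * |ω| ^ β)
  differentiable_ft : Differentiable ℝ (ft g)
  norm_deriv_ft_le : ∀ ω, ‖deriv (ft g) ω‖ ≤ Cg * ‖ft g ω‖ * (1 + |ω|) ^ τ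

/-- `ρ` is a phase of the spectrum of `φ` at the frequencies above `M`, with slope at most
`ρbar`. -/
structure IsPhaseFrom (M ρbar : ℝ) (φ ρ : ℝ → ℝ) : Prop where
  differentiableAt : ∀ ω, M ≤ ω → DifferentiableAt ℝ ρ ω
  abs_deriv_le : ∀ ω, M ≤ ω → |deriv ρ ω| ≤ ρbar
  norm_mul_exp : ∀ ω, M ≤ ω → ‖ft φ ω‖ * Complex.exp (ρ ω * Complex.I) = ft φ ω

section LowerBound

variable {s B A γ β Cg τ Cφ a M δ C ρbar σ μ : ℝ} {g φ ρ : ℝ → ℝ} {v w : ℝ≥0}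

theorem memLp_phaseBump (hM : 0 < M) (hρ : ∀ ω, M ≤ ω → DifferentiableAt ℝ ρ ω) (p : ℝ≥0∞) :
    MemLp (phaseBump ρ δ M) p :=
  (differentiable_phaseBump hM hρ).continuous.memLp_of_hasCompactSupport
    (.of_support_subset_isCompact isCompact_Icc (support_phaseBump_subset hM))

theorem integrable_fourier_phaseBump (hM : 0 < M) (hδ : 0 < δ)
    (hC : ∀ x, |deriv (bandCutoff M) x| ≤ C) (hρ : ∀ ω, M ≤ ω → DifferentiableAt ℝ ρ ω)
    (hρ' : ∀ ω, M ≤ ω → |deriv ρ ω| ≤ ρbar) :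
    Integrable (𝓕 (phaseBump ρ δ M)) ∧
      ∫ ξ, ‖𝓕 (phaseBump ρ δ M) ξ‖ ≤ √M * (δ * (1 + (C + ρbar))) := by
  have h := integrable_fourier_of_support_subset_Icc (differentiable_phaseBump hM hρ)
    (by linarith) (support_phaseBump_subset hM) hδ (norm_phaseBump_le hδ.le)
    (norm_deriv_phaseBump_le hM hδ.le hC hρ hρ')
  rwa [show 2 * M - M = M by ring, show δ + δ * (C + ρbar) = δ * (1 + (C + ρbar)) by ring] at h

theorem rpow_neg_eq_rpow_two_mul (hM : 0 < M) (hwM : w * M ^ 2 = 1) :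
    (w : ℝ) ^ (-s) = M ^ (2 * s) := by
  rw [eq_inv_of_mul_eq_one_left hwM, Real.inv_rpow (by positivity), Real.rpow_neg (by positivity),
    inv_inv, ← Real.rpow_natCast, ← Real.rpow_mul hM.le]
  push_cast
  rfl

theorem memSobolevBall_perturbedMixture (hs : 0 ≤ s)
    (hv : MemSobolevBall s (B / 2) (gaussianPDFReal 0 v)) (hM : 1 ≤ M) (hwM : w * M ^ 2 = 1)
    (hδ : 0 ≤ δ) (hρ : ∀ ω, M ≤ ω → DifferentiableAt ℝ ρ ω)
    (hu' : Integrable (𝓕 (phaseBump ρ δ M))) (hmass : ∫ x, |realInvFt (phaseBump ρ δ M) x| ≤ 1)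
    (hsobolev : 16 * sobolevConst s * (M ^ (2 * s) * (M * δ ^ 2)) ≤ (B / 2) ^ 2)
    (hσ : |σ| ≤ 1) : MemSobolevBall s B (perturbedMixture v w (phaseBump ρ δ M) σ) := by
  have hM0 : 0 < M := by linarith
  have hw : w ≠ 0 := by
    rintro rfl
    simp at hwM
  have hw_one : (w : ℝ) ≤ 1 :=
    (le_mul_of_one_le_right w.coe_nonneg (one_le_pow₀ hM)).trans_eq hwM
  have hu := memLp_one_iff_integrable.1 (memLp_phaseBump (δ := δ) hM0 hρ 1)
  have hu₂ := memLp_phaseBump (δ := δ) hM0 hρ 2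
  have hK := sobolevConst_pos s
  refine memSobolevBall_gaussianMixture hs hv hw (by exact_mod_cast hw_one)
    (fun x ↦ abs_add_mul_nonneg hσ _) ?_ (integrable_abs_add_mul_realInvFt hu' σ)
    (memLp_abs_add_mul_realInvFt hu hu₂ σ) ?_
  · rwa [integral_abs_add_mul_realInvFt (differentiable_phaseBump hM0 hρ).continuous hu hu'
      (phaseBump_eventuallyEq_zero hM0 hM0).eq_of_nhds]
  calc sobolevConst s * (w : ℝ) ^ (-s) *
        (2 * Real.pi * ∫ x, (|realInvFt (phaseBump ρ δ M) x| +
          σ * realInvFt (phaseBump ρ δ M) x) ^ 2)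
      ≤ sobolevConst s * (w : ℝ) ^ (-s) *
          (2 * Real.pi * (8 / Real.pi * ((2 * M - M) * δ ^ 2))) := by
        refine mul_le_mul_of_nonneg_left (mul_le_mul_of_nonneg_left ?_ (by positivity))
          (by positivity)
        exact (integral_abs_add_mul_realInvFt_sq_le hu hu₂ hσ).trans <|
          mul_le_mul_of_nonneg_left (integral_norm_sq_le_of_support_subset_Icc (by linarith)
            (support_phaseBump_subset hM0) (norm_phaseBump_le hδ)) (by positivity)
    _ = 16 * sobolevConst s * (M ^ (2 * s) * (M * δ ^ 2)) := by
        rw [rpow_neg_eq_rpow_two_mul hM0 hwM]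
        field_simp
        ring
    _ ≤ (B / 2) ^ 2 := hsobolev

theorem admissiblePrior_perturbedMixture (hφ : Integrable φ) (hs : 0 ≤ s) (hv : v ≠ 0)
    (hvB : MemSobolevBall s (B / 2) (gaussianPDFReal 0 v)) (hM : 1 ≤ M) (hwM : w * M ^ 2 = 1)
    (hδ : 0 ≤ δ) (hρ : ∀ ω, M ≤ ω → DifferentiableAt ℝ ρ ω)
    (hu' : Integrable (𝓕 (phaseBump ρ δ M))) (hmass : ∫ x, |realInvFt (phaseBump ρ δ M) x| ≤ 1)
    (hsobolev : 16 * sobolevConst s * (M ^ (2 * s) * (M * δ ^ 2)) ≤ (B / 2) ^ 2)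
    (hσ : |σ| ≤ 1) : AdmissiblePrior s B φ (perturbedMixture v w (phaseBump ρ δ M) σ) := by
  have hM0 : 0 < M := by linarith
  have hw : w ≠ 0 := by
    rintro rfl
    simp at hwM
  have hu := memLp_one_iff_integrable.1 (memLp_phaseBump (δ := δ) hM0 hρ 1)
  have hW := integrable_abs_add_mul_realInvFt hu' σ
  refine ⟨gaussianMixture_nonneg (fun x ↦ abs_add_mul_nonneg hσ _) ?_,
    integrable_perturbedMixture hu' σ, integral_gaussianMixture hv hw hW,
    memSobolevBall_perturbedMixture hs hvB hM hwM hδ hρ hu' hmass hsobolev hσ,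
    (integrable_ft_gaussianMixture hv hw hW).norm.mul_bdd (c := ∫ x, |φ x|)
      (continuous_ft hφ).norm.aestronglyMeasurable (.of_forall fun ω ↦ ?_)⟩
  · rwa [integral_abs_add_mul_realInvFt (differentiable_phaseBump hM0 hρ).continuous hu hu'
      (phaseBump_eventuallyEq_zero hM0 hM0).eq_of_nhds]
  · rw [norm_norm]
    exact norm_ft_le φ ω

theorem separationConst_mul_le_norm_linFunctional_sub (hφ_int : Integrable φ) (hCφ : 0 ≤ Cφ)
    (hφ : ∀ ω, Cφ * (ω ^ 2 + 1) ^ (-(a / 2)) ≤ ‖ft φ ω‖) (hv : v ≠ 0) (hw : w ≠ 0) (hM : 1 ≤ M)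
    (hwM : w * M ^ 2 ≤ 1) (hδ : 0 ≤ δ) (hρ : ∀ ω, M ≤ ω → DifferentiableAt ℝ ρ ω)
    (hphase : ∀ ω, M ≤ ω → ‖ft φ ω‖ * Complex.exp (ρ ω * Complex.I) = ft φ ω)
    (hu' : Integrable (𝓕 (phaseBump ρ δ M))) :
    separationConst Cφ a * (δ * M ^ (1 - a)) ≤
      ‖linFunctional φ (perturbedMixture v w (phaseBump ρ δ M) 1) -
        linFunctional φ (perturbedMixture v w (phaseBump ρ δ M) (-1))‖ := by
  have hM0 : 0 < M := by linarith
  rw [linFunctional_perturbedMixture_sub hφ_int hv hw hM0 hδ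
    (differentiable_phaseBump hM0 hρ).continuous
    (memLp_one_iff_integrable.1 (memLp_phaseBump hM0 hρ 1)) hu' hphase, Complex.norm_real]
  exact (separationConst_mul_le hφ_int hCφ hφ hw hM hwM hδ).trans (le_abs_self _)

theorem integral_abs_sparseMixture_sub_le_of_isSupersmooth (hg : IsSupersmooth g A γ β Cg τ)
    (hA : 0 < A) (hγ : 0 ≤ γ) (hβ : 0 ≤ β) (hτ : 0 ≤ τ) (hμ : μ ∈ Set.Icc 0 1) (hw : w ≠ 0)
    (hM : 1 ≤ M) (hwM : w * M ^ 2 ≤ 1) (hδ : 0 < δ) (hC : ∀ x, |deriv (bandCutoff M) x| ≤ C)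
    (hρ : ∀ ω, M ≤ ω → DifferentiableAt ℝ ρ ω) (hρ' : ∀ ω, M ≤ ω → |deriv ρ ω| ≤ ρbar) :
    ∫ y, |sparseMixture g μ (perturbedMixture v w (phaseBump ρ δ M) 1) y -
        sparseMixture g μ (perturbedMixture v w (phaseBump ρ δ M) (-1)) y| ≤
      4 * (√M * (δ * (A * Real.exp (-γ * M ^ β)) *
        (3 + (C + ρbar) + |Cg| * (1 + 2 * M) ^ τ))) := by
  have hM0 : 0 < M := by linarith
  obtain ⟨hF, hF_le⟩ := integral_norm_fourier_phaseBump_mul_le hA hγ hβ hτ hg.norm_ft_le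
    hg.differentiable_ft hg.norm_deriv_ft_le hw hM hwM hδ hC hρ hρ'
  exact (integral_abs_sparseMixture_perturbedMixture_sub_le hμ hg.integrable
    (differentiable_phaseBump hM0 hρ).continuous
    (memLp_one_iff_integrable.1 (memLp_phaseBump hM0 hρ 1))
    (integrable_fourier_phaseBump hM0 hδ hC hρ hρ').1
    (phaseBump_eventuallyEq_zero hM0 hM0).eq_of_nhds hF).trans
      (mul_le_mul_of_nonneg_left hF_le (by norm_num))

theorem exists_admissiblePrior_le_sqRisk {ι : Type*} [Fintype ι] {T : (ι → ℝ) → ℂ}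
    (hT : AEStronglyMeasurable T) (hg : IsSupersmooth g A γ β Cg τ) (hA : 0 < A) (hγ : 0 ≤ γ)
    (hβ : 0 ≤ β) (hτ : 0 ≤ τ) (hφ_int : Integrable φ) (hCφ : 0 < Cφ)
    (hφ : ∀ ω, Cφ * (ω ^ 2 + 1) ^ (-(a / 2)) ≤ ‖ft φ ω‖) (hρ : IsPhaseFrom M ρbar φ ρ)
    (hC : ∀ x, |deriv (bandCutoff M) x| ≤ C) (hμ : μ ∈ Set.Icc 0 1) (hs : 0 ≤ s) (hB : 0 < B)
    (hM : 1 ≤ M) (hδ : 0 < δ) (hmass : 2 * (√M * (δ * (1 + (C + ρbar)))) ≤ 1)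
    (hsobolev : 16 * sobolevConst s * (M ^ (2 * s) * (M * δ ^ 2)) ≤ (B / 2) ^ 2)
    (hsample : Fintype.card ι * (4 * (√M * (δ * (A * Real.exp (-γ * M ^ β)) *
      (3 + (C + ρbar) + |Cg| * (1 + 2 * M) ^ τ)))) ≤ 1 / 2) :
    ∃ f, AdmissiblePrior s B φ f ∧
      ENNReal.ofReal ((separationConst Cφ a * (δ * M ^ (1 - a))) ^ 2 / 8) ≤
        sqRisk (sparseMixture g μ f) T (linFunctional φ f) := by
  obtain ⟨v, hv, hvB⟩ := exists_memSobolevBall_gaussianPDFReal hs (half_pos hB)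
  obtain ⟨w, hw_eq⟩ : ∃ w : ℝ≥0, (w : ℝ) = (M ^ 2)⁻¹ := CanLift.prf _ (by positivity)
  have hwM : w * M ^ 2 = 1 := by rw [hw_eq, inv_mul_cancel₀ (by positivity)]
  have hw : w ≠ 0 := by
    rintro rfl
    simp at hwM
  obtain ⟨hu', hu'_le⟩ := integrable_fourier_phaseBump (by linarith) hδ hC hρ.differentiableAt
    hρ.abs_deriv_le
  let f := perturbedMixture v w (phaseBump ρ δ M)
  have hf (σ : ℝ) (hσ : |σ| ≤ 1) : AdmissiblePrior s B φ (f σ) :=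
    admissiblePrior_perturbedMixture hφ_int hs hv hvB hM hwM hδ.le hρ.differentiableAt hu'
      ((integral_abs_realInvFt_le hu').trans (by linarith)) hsobolev hσ
  have hplus := hf 1 (by norm_num)
  have hminus := hf (-1) (by norm_num)
  have hclose := (mul_le_mul_of_nonneg_left
    (integral_abs_sparseMixture_sub_le_of_isSupersmooth (v := v) hg hA hγ hβ hτ hμ hw hM hwM.le hδ
      hC hρ.differentiableAt hρ.abs_deriv_le) (Nat.cast_nonneg (Fintype.card ι))).trans hsample
  have hfar : ENNReal.ofReal ((separationConst Cφ a * (δ * M ^ (1 - a))) ^ 2 / 8) ≤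
      ENNReal.ofReal (‖linFunctional φ (f 1) - linFunctional φ (f (-1))‖ ^ 2 / 8) := by
    have hκ := separationConst_pos hCφ a
    gcongr
    exact separationConst_mul_le_norm_linFunctional_sub hφ_int hCφ.le hφ hv hw hM hwM.le hδ.le
      hρ.differentiableAt hρ.norm_mul_exp hu'
  obtain h | h := le_sqRisk_or_le_sqRisk hT (sparseMixture_nonneg hg.nonneg hplus.nonneg hμ)
    (sparseMixture_nonneg hg.nonneg hminus.nonneg hμ)
    (integrable_sparseMixture hg.integrable hplus.integrable)
    (integrable_sparseMixture hg.integrable hminus.integrable)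
    (integral_sparseMixture hg.integrable hg.integral_eq_one hplus.integrable
      hplus.integral_eq_one) hclose (linFunctional φ (f 1)) (linFunctional φ (f (-1)))
  · exact ⟨f 1, hplus, hfar.trans h⟩
  · exact ⟨f (-1), hminus, hfar.trans h⟩

end LowerBound

/-- The frequency at which a spectrum of order `exp (-γ |ω| ^ β)` drops to `x⁻²`. -/
noncomputable def bandwidth (γ β x : ℝ) : ℝ := (2 / γ * Real.log x) ^ (1 / β)

section Rate

open Filter

variable {γ β τ s a x M D L K B : ℝ}

theorem tendsto_bandwidth_atTop (hγ : 0 < γ) (hβ : 0 < β) :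
    Tendsto (bandwidth γ β) atTop atTop :=
  (tendsto_rpow_atTop (by positivity)).comp
    (Real.tendsto_log_atTop.const_mul_atTop (by positivity))

theorem bandwidth_rpow (hγ : 0 < γ) (hx : 1 ≤ x) (p : ℝ) :
    bandwidth γ β x ^ p = (2 / γ) ^ (p / β) * Real.log x ^ (p / β) := by
  have hlog := Real.log_nonneg hx
  rw [bandwidth, ← Real.rpow_mul (by positivity), one_div_mul_eq_div,
    Real.mul_rpow (by positivity) hlog]

theorem exp_neg_mul_bandwidth_rpow (hγ : 0 < γ) (hβ : 0 < β) (hx : 1 ≤ x) :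
    Real.exp (-γ * bandwidth γ β x ^ β) = (x ^ 2)⁻¹ := by
  rw [bandwidth_rpow hγ hx, div_self hβ.ne', Real.rpow_one, Real.rpow_one,
    show -γ * (2 / γ * Real.log x) = -(2 * Real.log x) by field_simp, Real.exp_neg,
    ← Real.log_rpow (by linarith), Real.exp_log (by positivity), Real.rpow_two]

theorem add_mul_one_add_two_mul_rpow_le (hτ : 0 ≤ τ) (hD : 0 ≤ D) (hL : 0 ≤ L) (hM : 1 ≤ M) :
    D + L * (1 + 2 * M) ^ τ ≤ (D + L * 3 ^ τ) * M ^ τ := by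
  calc D + L * (1 + 2 * M) ^ τ ≤ D * M ^ τ + L * (3 * M) ^ τ := by
        gcongr
        · exact le_mul_of_one_le_right hD (Real.one_le_rpow hM hτ)
        · linarith
    _ = (D + L * 3 ^ τ) * M ^ τ := by
        rw [Real.mul_rpow (by norm_num) (by linarith)]
        ring

theorem tendsto_mul_exp_neg_mul_bandwidth_rpow (hγ : 0 < γ) (hβ : 0 < β) (hτ : 0 ≤ τ)
    (hD : 0 ≤ D) (hL : 0 ≤ L) :
    Tendsto (fun x ↦ x * (√(bandwidth γ β x) * (Real.exp (-γ * bandwidth γ β x ^ β) *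
      (D + L * (1 + 2 * bandwidth γ β x) ^ τ)))) atTop (nhds 0) := by
  let p := (1 / 2 + τ) / β
  have hlog : Tendsto (fun x : ℝ ↦ (D + L * 3 ^ τ) * (2 / γ) ^ p * (Real.log x ^ p / x)) atTop
      (nhds 0) := by
    simpa using ((isLittleO_log_rpow_rpow_atTop p one_pos).tendsto_div_nhds_zero).const_mul
      ((D + L * 3 ^ τ) * (2 / γ) ^ p)
  have hband := (tendsto_bandwidth_atTop hγ hβ).eventually_ge_atTop 1
  refine squeeze_zero' ?_ ?_ hlog
  · filter_upwards [hband, eventually_ge_atTop 1] with x hM hx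
    positivity
  · filter_upwards [hband, eventually_ge_atTop 1] with x hM hx
    have hpow : √(bandwidth γ β x) * bandwidth γ β x ^ τ = (2 / γ) ^ p * Real.log x ^ p := by
      rw [Real.sqrt_eq_rpow, ← Real.rpow_add (by linarith), bandwidth_rpow hγ hx]
    calc x * (√(bandwidth γ β x) * (Real.exp (-γ * bandwidth γ β x ^ β) *
          (D + L * (1 + 2 * bandwidth γ β x) ^ τ)))
        ≤ x * (√(bandwidth γ β x) * ((x ^ 2)⁻¹ *
            ((D + L * 3 ^ τ) * bandwidth γ β x ^ τ))) := by
          rw [exp_neg_mul_bandwidth_rpow hγ hβ hx]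
          gcongr
          exact add_mul_one_add_two_mul_rpow_le hτ hD hL hM
      _ = (D + L * 3 ^ τ) * (√(bandwidth γ β x) * bandwidth γ β x ^ τ) / x := by
          field_simp
      _ = (D + L * 3 ^ τ) * (2 / γ) ^ p * (Real.log x ^ p / x) := by
          rw [hpow]
          ring

theorem sqrt_mul_rpow_neg_sub_half_le_one (hs : 0 ≤ s) (hM : 1 ≤ M) :
    √M * M ^ (-s - 1 / 2) ≤ 1 := by
  rw [Real.sqrt_eq_rpow, ← Real.rpow_add (by linarith)]
  exact Real.rpow_le_one_of_one_le_of_nonpos hM (by linarith)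

theorem rpow_two_mul_mul_rpow_neg_sub_half_sq (hM : 0 < M) :
    M ^ (2 * s) * (M * (M ^ (-s - 1 / 2)) ^ 2) = 1 := by
  rw [← Real.rpow_mul_natCast hM.le, mul_comm M, ← Real.rpow_add_one hM.ne', ← Real.rpow_add hM,
    show 2 * s + ((-s - 1 / 2) * (2 : ℕ) + 1) = 0 by push_cast; ring, Real.rpow_zero]

theorem bandwidth_rpow_neg_sub_half_mul_sq (hγ : 0 < γ) (hM : 0 < bandwidth γ β x) (hx : 1 ≤ x) :
    (bandwidth γ β x ^ (-s - 1 / 2) * bandwidth γ β x ^ (1 - a)) ^ 2 =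
      (2 / γ) ^ (-((2 * s + 2 * a - 1) / β)) * Real.log x ^ (-((2 * s + 2 * a - 1) / β)) := by
  rw [← Real.rpow_add hM, ← Real.rpow_mul_natCast hM.le, bandwidth_rpow hγ hx]
  congr 2 <;> push_cast <;> ring

theorem exists_amplitude (hD : 0 ≤ D) (hK : 0 < K) (hB : 0 < B) :
    ∃ ε, 0 < ε ∧ ε ≤ 1 ∧ 2 * (ε * (1 + D)) ≤ 1 ∧ 16 * K * ε ^ 2 ≤ (B / 2) ^ 2 := by
  let ε := min (1 / (2 * (1 + D))) (min 1 (B / (8 * √K)))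
  have hmass : ε ≤ 1 / (2 * (1 + D)) := min_le_left _ _
  have hsobolev : ε ≤ B / (8 * √K) := (min_le_right _ _).trans (min_le_right _ _)
  have hε : 0 < ε := by positivity
  refine ⟨ε, hε, (min_le_right _ _).trans (min_le_left _ _), ?_, ?_⟩
  · rw [le_div_iff₀ (by positivity)] at hmass
    linarith
  · calc 16 * K * ε ^ 2 ≤ 16 * K * (B / (8 * √K)) ^ 2 := by gcongr
      _ = (B / 2) ^ 2 := by
        rw [div_pow, mul_pow, Real.sq_sqrt hK.le]
        field_simp
        norm_num

end Rate

theorem IsPhaseFrom.mono {M M' ρbar : ℝ} {φ ρ : ℝ → ℝ} (h : IsPhaseFrom M ρbar φ ρ)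
    (hM : M ≤ M') : IsPhaseFrom M' ρbar φ ρ where
  differentiableAt ω hω := h.differentiableAt ω (hM.trans hω)
  abs_deriv_le ω hω := h.abs_deriv_le ω (hM.trans hω)
  norm_mul_exp ω hω := h.norm_mul_exp ω (hM.trans hω)

theorem isPhaseFrom_arg {ω₀ M ρbar : ℝ} {φ ρ ρ' : ℝ → ℝ} (hM : ω₀ < M)
    (hρ : ∀ ω, ω₀ < |ω| → ρ ω = (ft φ ω).arg) (hρ' : ∀ ω, ω₀ < |ω| → HasDerivAt ρ (ρ' ω) ω)
    (hbdd : ∀ ω, ω₀ < |ω| → |ρ' ω| ≤ ρbar) : IsPhaseFrom M ρbar φ ρ := by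
  have hband {ω : ℝ} (hω : M ≤ ω) : ω₀ < |ω| := hM.trans_le (hω.trans (le_abs_self ω))
  refine ⟨fun ω hω ↦ (hρ' ω (hband hω)).differentiableAt, fun ω hω ↦ ?_, fun ω hω ↦ ?_⟩
  · rw [(hρ' ω (hband hω)).deriv]
    exact hbdd ω (hband hω)
  · rw [hρ ω (hband hω), Complex.norm_mul_exp_arg_mul_I]

theorem mul_rpow_neg_mul_exp_le {A α : ℝ} (hA : 0 ≤ A) (hα : 0 ≤ α) (ω y : ℝ) :
    A * (ω ^ 2 + 1) ^ (-(α / 2)) * Real.exp y ≤ A * Real.exp y := by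
  gcongr
  exact mul_le_of_le_one_right hA <|
    Real.rpow_le_one_of_one_le_of_nonpos (by nlinarith [sq_nonneg ω]) (by linarith)

theorem exists_admissiblePrior_le_sqRisk_of_amplitude {ι : Type*} [Fintype ι]
    {g φ ρ : ℝ → ℝ} {A γ β Cg τ Cφ a M ρbar C s B ε μ : ℝ} {T : (ι → ℝ) → ℂ}
    (hT : AEStronglyMeasurable T) (hg : IsSupersmooth g A γ β Cg τ) (hA : 0 < A) (hγ : 0 ≤ γ)
    (hβ : 0 ≤ β) (hτ : 0 ≤ τ) (hφ_int : Integrable φ) (hCφ : 0 < Cφ)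
    (hφ : ∀ ω, Cφ * (ω ^ 2 + 1) ^ (-(a / 2)) ≤ ‖ft φ ω‖) (hρ : IsPhaseFrom M ρbar φ ρ)
    (hC : ∀ x, |deriv (bandCutoff M) x| ≤ C) (hμ : μ ∈ Set.Icc 0 1) (hs : 0 ≤ s) (hB : 0 < B)
    (hM : 1 ≤ M) (hε : 0 < ε) (hε_one : ε ≤ 1) (hmass : 2 * (ε * (1 + (C + ρbar))) ≤ 1)
    (hsobolev : 16 * sobolevConst s * ε ^ 2 ≤ (B / 2) ^ 2)
    (hsample : 4 * A * (Fintype.card ι * (√M * (Real.exp (-γ * M ^ β) *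
      (3 + (C + ρbar) + |Cg| * (1 + 2 * M) ^ τ)))) ≤ 1 / 2) :
    ∃ f, AdmissiblePrior s B φ f ∧
      ENNReal.ofReal ((separationConst Cφ a * ε) ^ 2 * (M ^ (-s - 1 / 2) * M ^ (1 - a)) ^ 2 / 8) ≤
        sqRisk (sparseMixture g μ f) T (linFunctional φ f) := by
  have hM0 : 0 < M := by linarith
  have hD : 0 ≤ C + ρbar := add_nonneg ((abs_nonneg _).trans (hC 0))
    ((abs_nonneg _).trans (hρ.abs_deriv_le M le_rfl))
  have hδ_one : ε * M ^ (-s - 1 / 2) ≤ 1 := mul_le_one₀ hε_one (by positivity)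
    (Real.rpow_le_one_of_one_le_of_nonpos hM (by linarith))
  have hmass_δ : 2 * (√M * (ε * M ^ (-s - 1 / 2) * (1 + (C + ρbar)))) ≤ 1 := by
    calc 2 * (√M * (ε * M ^ (-s - 1 / 2) * (1 + (C + ρbar))))
        = √M * M ^ (-s - 1 / 2) * (2 * (ε * (1 + (C + ρbar)))) := by ring
      _ ≤ 1 := mul_le_one₀ (sqrt_mul_rpow_neg_sub_half_le_one hs hM) (by positivity) hmass
  have hsobolev_δ : 16 * sobolevConst s * (M ^ (2 * s) * (M * (ε * M ^ (-s - 1 / 2)) ^ 2)) ≤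
      (B / 2) ^ 2 := by
    rwa [mul_pow, mul_left_comm M, mul_left_comm (M ^ (2 * s)),
      rpow_two_mul_mul_rpow_neg_sub_half_sq hM0, mul_one]
  have hsample_δ : Fintype.card ι * (4 * (√M * (ε * M ^ (-s - 1 / 2) *
      (A * Real.exp (-γ * M ^ β)) * (3 + (C + ρbar) + |Cg| * (1 + 2 * M) ^ τ)))) ≤ 1 / 2 := by
    calc Fintype.card ι * (4 * (√M * (ε * M ^ (-s - 1 / 2) * (A * Real.exp (-γ * M ^ β)) *
          (3 + (C + ρbar) + |Cg| * (1 + 2 * M) ^ τ))))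
        = ε * M ^ (-s - 1 / 2) * (4 * A * (Fintype.card ι * (√M * (Real.exp (-γ * M ^ β) *
            (3 + (C + ρbar) + |Cg| * (1 + 2 * M) ^ τ))))) := by ring
      _ ≤ 1 / 2 := (mul_le_of_le_one_left (by positivity) hδ_one).trans hsample
  obtain ⟨f, hf, hrisk⟩ := exists_admissiblePrior_le_sqRisk hT hg hA hγ hβ hτ hφ_int hCφ hφ hρ hC
    hμ hs hB hM (by positivity) hmass_δ hsobolev_δ hsample_δ
  exact ⟨f, hf, le_of_eq_of_le (by congr 1; ring) hrisk⟩

theorem stmt_14_general {g φ ρ : ℝ → ℝ} {A γ β Cg τ Cφ a M₀ ρbar s B : ℝ}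
    (hg : IsSupersmooth g A γ β Cg τ) (hA : 0 < A) (hγ : 0 < γ) (hβ : 0 < β) (hτ : 0 ≤ τ)
    (hCφ : 0 < Cφ) (hφ : ∀ ω, Cφ * (ω ^ 2 + 1) ^ (-(a / 2)) ≤ ‖ft φ ω‖)
    (hρ : IsPhaseFrom M₀ ρbar φ ρ) (hs : 0 ≤ s) (hB : 0 < B) :
    ∃ C, 0 < C ∧ ∀ᶠ n : ℕ in Filter.atTop, ∀ μ ∈ Set.Icc (0 : ℝ) 1,
      ∀ T : (Fin n → ℝ) → ℂ, Measurable T → ∃ f, AdmissiblePrior s B φ f ∧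
        ENNReal.ofReal (C * Real.log n ^ (-((2 * s + 2 * a - 1) / β))) ≤
          sqRisk (sparseMixture g μ f) T (linFunctional φ f) := by
  obtain ⟨C, hC_nonneg, hC⟩ := exists_abs_deriv_bandCutoff_le
  have hD : 0 ≤ C + ρbar := add_nonneg hC_nonneg ((abs_nonneg _).trans (hρ.abs_deriv_le M₀ le_rfl))
  have hφ_int : Integrable φ := integrable_of_ft_ne_zero (ω := 0) <| norm_pos_iff.1 <|
    lt_of_lt_of_le (by positivity) (hφ 0)
  obtain ⟨ε, hε, hε_one, hmass, hsobolev⟩ := exists_amplitude hD (sobolevConst_pos s) hB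
  have hκ := separationConst_pos hCφ a
  refine ⟨(separationConst Cφ a * ε) ^ 2 * (2 / γ) ^ (-((2 * s + 2 * a - 1) / β)) / 8,
    by positivity, ?_⟩
  have hband := (tendsto_bandwidth_atTop hγ hβ).comp tendsto_natCast_atTop_atTop (α := ℕ)
  have hsample := ((tendsto_mul_exp_neg_mul_bandwidth_rpow hγ hβ hτ
    (add_nonneg zero_le_three hD) (abs_nonneg Cg)).comp
      tendsto_natCast_atTop_atTop).const_mul (4 * A)
  rw [mul_zero] at hsample
  filter_upwards [hband.eventually_ge_atTop 1, hband.eventually_ge_atTop M₀,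
    hsample.eventually_le_const one_half_pos, Filter.eventually_ge_atTop 1]
    with n hM hM₀ hsample_n hn μ hμ T hT
  simp only [Function.comp_apply] at hM hM₀ hsample_n
  obtain ⟨f, hf, hrisk⟩ := exists_admissiblePrior_le_sqRisk_of_amplitude hT.aestronglyMeasurable
    hg hA hγ.le hβ.le hτ hφ_int hCφ hφ (hρ.mono hM₀) (hC _ hM) hμ hs hB hM hε hε_one hmass hsobolev
    (by simpa only [Fintype.card_fin] using hsample_n)
  rw [bandwidth_rpow_neg_sub_half_mul_sq hγ (one_pos.trans_le hM) (by exact_mod_cast hn)] at hrisk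
  exact ⟨f, hf, le_of_eq_of_le (by congr 1; ring) hrisk⟩

theorem stmt_14 (g φ : ℝ → ℝ) (ν : ℝ) (hν : 1 / 2 < ν) (hν1 : ν < 1)
    (hg_nonneg : ∀ x, 0 ≤ g x) (hg_int : Integrable g) (hg_one : (∫ x, g x) = 1)
    (hg_bdd : BddAbove (Set.range g))
    (Cg2 α γ β : ℝ) (hCg2 : 0 < Cg2) (hα : 0 ≤ α) (hγ : 0 < γ) (hβ : 0 < β)
    (hgup : ∀ ω : ℝ,
      ‖ft g ω‖ ≤ Cg2 * (ω ^ 2 + 1) ^ (-(α / 2)) * Real.exp (-γ * |ω| ^ β))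
    (Cφ1 a : ℝ) (hCφ1 : 0 < Cφ1)
    (hφlow : ∀ ω : ℝ, Cφ1 * (ω ^ 2 + 1) ^ (-(a / 2)) ≤ ‖ft φ ω‖)
    (Cg τ : ℝ) (hτ : 0 ≤ τ) (gd : ℝ → ℂ)
    (hgd : ∀ ω : ℝ, HasDerivAt (ft g) (gd ω) ω)
    (hgd_bdd : ∀ ω : ℝ, ‖gd ω‖ ≤ Cg * ‖ft g ω‖ * (1 + |ω|) ^ τ)
    (ω₀ ρbar : ℝ) (hω₀ : 0 < ω₀)
    (ρ ρ' ρ'' : ℝ → ℝ)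
    (hρ_arg : ∀ ω : ℝ, ω₀ < |ω| → ρ ω = (ft φ ω).arg)
    (hρ'deriv : ∀ ω : ℝ, ω₀ < |ω| → HasDerivAt ρ (ρ' ω) ω)
    (hρ''deriv : ∀ ω : ℝ, ω₀ < |ω| → HasDerivAt ρ' (ρ'' ω) ω)
    (hρ''cont : ContinuousOn ρ'' {ω : ℝ | ω₀ < |ω|})
    (hρbdd : ∀ ω : ℝ, ω₀ < |ω| → |ρ ω| ≤ ρbar ∧ |ρ' ω| ≤ ρbar ∧ |ρ'' ω| ≤ ρbar) :
    ∀ s B : ℝ, 0 ≤ s → 0 < B →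
      ∃ C : ℝ, 0 < C ∧ ∃ N : ℕ, ∀ n : ℕ, N ≤ n →
        ∀ T : (Fin n → ℝ) → ℂ, Measurable T →
          ∃ f₀ : ℝ → ℝ, (∀ x, 0 ≤ f₀ x) ∧ Integrable f₀ ∧ (∫ x, f₀ x) = 1 ∧
            (∫ ω : ℝ, ‖ft f₀ ω‖ ^ 2 * (ω ^ 2 + 1) ^ s) ≤ B ^ 2 ∧
            Integrable (fun ω : ℝ => ‖ft f₀ ω‖ * ‖ft φ ω‖) ∧
            ENNReal.ofReal (C * (Real.log n) ^ (-((2 * s + 2 * a - 1) / β))) ≤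
              ∫⁻ y : Fin n → ℝ,
                ENNReal.ofReal
                  (‖T y - (1 / (2 * Real.pi) : ℂ) * ∫ ω : ℝ, ft f₀ ω * ft φ (-ω)‖ ^ 2 *
                    ∏ i : Fin n,
                      ((1 - (n : ℝ) ^ (ν - 1)) * g (y i) +
                        (n : ℝ) ^ (ν - 1) * ∫ θ : ℝ, g (y i - θ) * f₀ θ)) := by
  intro s B hs hB
  have hg : IsSupersmooth g Cg2 γ β Cg τ :=
    ⟨hg_nonneg, hg_int, hg_one, fun ω ↦ (hgup ω).trans (mul_rpow_neg_mul_exp_le hCg2.le hα ω _),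
      fun ω ↦ (hgd ω).differentiableAt, fun ω ↦ (hgd ω).deriv ▸ hgd_bdd ω⟩
  have hρ := isPhaseFrom_arg (lt_add_one ω₀) hρ_arg hρ'deriv fun ω hω ↦ (hρbdd ω hω).2.1
  obtain ⟨C, hC, hev⟩ := stmt_14_general hg hCg2 hγ hβ hτ hCφ1 hφlow hρ hs hB
  obtain ⟨N, hN⟩ := Filter.eventually_atTop.1 (hev.and (Filter.eventually_ge_atTop 1))
  refine ⟨C, hC, N, fun n hn T hT ↦ ?_⟩
  obtain ⟨hbound, hn_one⟩ := hN n hn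
  have hμ : (n : ℝ) ^ (ν - 1) ∈ Set.Icc 0 1 := ⟨by positivity,
    Real.rpow_le_one_of_one_le_of_nonpos (by exact_mod_cast hn_one) (by linarith)⟩
  obtain ⟨f, hf, hrisk⟩ := hbound _ hμ T hT
  exact ⟨f, hf.nonneg, hf.integrable, hf.integral_eq_one, hf.memSobolevBall.2,
    hf.integrable_spectrum_mul, hrisk⟩
end
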